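/- arXiv:1907.00964 — 3 statements merged into one kernel-verified Lean document; each statement's English description precedes it below -/
import Mathlib

section
/- For each integer t ≥ 3, there exists a constant C = C(t) > 0 such that every tournament on n ≥ C vertices that is C·n^{-1/⌈t/2⌉}-far from being transitive (i.e., every linear ordering of its vertex set has at least C·n^{2-1/⌈t/2⌉} backward edges) contains a copy of the unavoidable t-tournament 𝒰_t. -/
/-- `T` is a tournament: an orientation of the complete graph. -/
def IsTournament {V : Type*} (T : V → V → Prop) : Prop :=
  (∀ x, ¬ T x x) ∧ ∀ x y, x ≠ y → (T x y ↔ ¬ T y x)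

/-- The unavoidable `t`-tournament `𝒰_t` on `Fin 3 × Fin t`: three transitive classes
of order `t`, with all edges from class `i` to class `i + 1` (mod 3). -/
def UPat (t : ℕ) (p q : Fin 3 × Fin t) : Prop :=
  (p.1 = q.1 ∧ p.2 < q.2) ∨ q.1 = p.1 + 1

/-- `T` contains a copy of the unavoidable `t`-tournament `𝒰_t`. -/
def ContainsU {V : Type*} (T : V → V → Prop) (t : ℕ) : Prop :=
  ∃ f : Fin 3 × Fin t → V, Function.Injective f ∧
    ∀ p q : Fin 3 × Fin t, UPat t p q → T (f p) (f q)

/-- The number of backward edges of the ordering `σ` of the vertices of `T`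
(position `k` is occupied by the vertex `σ k`). -/
noncomputable def backCount {n : ℕ} {V : Type*} (T : V → V → Prop) (σ : Fin n ≃ V) : ℕ :=
  {p : Fin n × Fin n | p.1 < p.2 ∧ T (σ p.2) (σ p.1)}.ncard

/-!
Order a `𝒰_t`-free tournament so that the number of backward edges is least, and let
`s = ⌈t / 2⌉`, `β = 2 - 1 / s`. Since no rearrangement of an interval of positions helps, a vertex
with `d` backward edges inside an interval lies in about `d ^ 2` cyclic triangles of the interval
unless the interval has about `d ^ 2` backward edges. A `𝒰_t`-free tournament has only boundedly
many vertices lying in a positive proportion of all possible cyclic triangles (otherwise the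
Kővári–Sós–Turán theorem and Ramsey's theorem produce `𝒰_t`), so sorting an interval by outdegree
leaves few backward edges, and in each interval only boundedly many vertices have linear backward
degree.

Cut the ordering into blocks of length `m`. By Kővári–Sós–Turán, a pair of blocks with at least
`C * m ^ β` backward edges contains many disjoint backward bicliques with transitive sides of sizes
`s` and `t` whose vertices have small backward degree. Two such bicliques between blocks `p < q` and
`p' < q'` with `p < p' < q < q'` and only forward edges between them form `𝒰_t`: one class is the
union of the two sides of size `s`. If some backward edge joined any two of the bicliques, Ramsey's
theorem would give a large complete backward pair of sets, and a vertex set of `𝒰_t` through the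
gap between them. Hence dense pairs of blocks do not cross, and there are at most `6 * 144` of them
among `144 × 144` pairs. So the largest number `e m` of backward edges of a pair of blocks
satisfies `e (144 * m) ≤ 144 ^ 2 * C * m ^ β + 6 * 144 * e m`, whence `e m = O(m ^ β)` because
`144 ^ β ≥ 12 * 144`.
-/

section

open Finset

section TransitiveSequences

variable {V : Type*} {T : V → V → Prop}

lemma IsTournament.asymm (hT : IsTournament T) {x y : V} (h : T x y) : ¬ T y x :=
  (hT.2 x y fun hxy => hT.1 y (hxy ▸ h)).1 h

lemma IsTournament.of_not (hT : IsTournament T) {x y : V} (hne : x ≠ y) (h : ¬ T x y) : T y x :=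
  (hT.2 y x hne.symm).2 h

lemma IsTournament.not_iff (hT : IsTournament T) {x y : V} : ¬ T x y ↔ y = x ∨ T y x := by
  refine ⟨fun h => or_iff_not_imp_left.2 fun hne => hT.of_not (Ne.symm hne) h, ?_⟩
  rintro (rfl | h)
  exacts [hT.1 y, hT.asymm h]

lemma IsTournament.swap (hT : IsTournament T) : IsTournament (Function.swap T) :=
  ⟨hT.1, fun x y hne => hT.2 y x hne.symm⟩

lemma IsTournament.comp {W : Type*} (hT : IsTournament T) {f : W → V}
    (hf : Function.Injective f) : IsTournament fun x y => T (f x) (f y) :=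
  ⟨fun _ => hT.1 _, fun _ _ hne => hT.2 _ _ (hf.ne hne)⟩

lemma ContainsU.of_comp {W : Type*} {t : ℕ} {f : W → V} (hf : Function.Injective f)
    (h : ContainsU (fun x y => T (f x) (f y)) t) : ContainsU T t := by
  obtain ⟨g, hg, hgT⟩ := h
  exact ⟨f ∘ g, hf.comp hg, hgT⟩

/-- The sequence `f` of vertices spans a transitive tournament, all of whose edges point
forward along the sequence. -/
def IsTransSeq (T : V → V → Prop) {k : ℕ} (f : Fin k → V) : Prop :=
  ∀ i j, i < j → T (f i) (f j)

instance [DecidableRel T] {k : ℕ} : DecidablePred (IsTransSeq T (k := k)) :=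
  fun f => inferInstanceAs (Decidable (∀ i j, i < j → T (f i) (f j)))

lemma IsTransSeq.castLE {k l : ℕ} {f : Fin l → V} (hf : IsTransSeq T f) (h : k ≤ l) :
    IsTransSeq T fun i => f (Fin.castLE h i) :=
  fun _ _ hij => hf _ _ hij

lemma IsTransSeq.cons {k : ℕ} {f : Fin k → V} {x : V} (hf : IsTransSeq T f)
    (hx : ∀ i, T x (f i)) : IsTransSeq T (Fin.cons x f) := by
  intro i j hij
  induction j using Fin.cases with
  | zero => exact absurd hij (Fin.not_lt_zero i)
  | succ j =>
    induction i using Fin.cases with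
    | zero => simpa using hx j
    | succ i => simpa using hf i j (Fin.succ_lt_succ_iff.1 hij)

lemma IsTransSeq.append {k l : ℕ} {f : Fin k → V} {g : Fin l → V} (hf : IsTransSeq T f)
    (hg : IsTransSeq T g) (hfg : ∀ i j, T (f i) (g j)) : IsTransSeq T (Fin.append f g) := by
  intro i j hij
  induction i using Fin.addCases with
  | left i =>
    induction j using Fin.addCases with
    | left j => simpa using hf i j hij
    | right j => simpa using hfg i j
  | right i =>
    induction j using Fin.addCases with
    | left j =>
      have := Fin.lt_def.1 hij
      simp only [Fin.val_natAdd, Fin.val_castAdd] at this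
      omega
    | right j => simpa using hg i j (Nat.lt_of_add_lt_add_left (Fin.lt_def.1 hij))

variable [DecidableRel T]

lemma IsTournament.card_out_add_card_in (hT : IsTournament T) {S : Finset V} {x : V}
    (hx : x ∈ S) : #{y ∈ S | T x y} + (#{y ∈ S | T y x} + 1) = #S := by
  classical
  have hcompl : {y ∈ S | ¬ T x y} = insert x {y ∈ S | T y x} := by
    ext y
    simp only [mem_filter, mem_insert, hT.not_iff]
    constructor
    · tauto
    · rintro (rfl | h)
      exacts [⟨hx, .inl rfl⟩, ⟨h.1, .inr h.2⟩]
  rw [← card_insert_of_notMem (a := x) (by simp [hT.1]), ← hcompl,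
    card_filter_add_card_filter_not]

lemma IsTournament.two_mul_sum_card_out (hT : IsTournament T) (S : Finset V) :
    2 * ∑ x ∈ S, (#{y ∈ S | T x y} : ℝ) = #S * (#S - 1) := by
  have hswap : ∑ x ∈ S, #{y ∈ S | T x y} = ∑ x ∈ S, #{y ∈ S | T y x} :=
    sum_card_bipartiteAbove_eq_sum_card_bipartiteBelow T
  have hsum := sum_congr rfl fun x hx => hT.card_out_add_card_in (S := S) hx
  simp only [sum_add_distrib, ← hswap, sum_const, smul_eq_mul, mul_one] at hsum
  have hsum' : ∑ x ∈ S, (#{y ∈ S | T x y} : ℝ) + (∑ x ∈ S, (#{y ∈ S | T x y} : ℝ) + #S) =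
      #S * #S := by exact_mod_cast hsum
  linarith

lemma IsTournament.card_le_of_forall_card_out_le (hT : IsTournament T) {S : Finset V} {x : ℝ}
    (hx : 0 ≤ x) (h : ∀ v ∈ S, #{w ∈ S | T v w} ≤ x) : #S ≤ 2 * x + 1 := by
  rcases S.eq_empty_or_nonempty with rfl | hS
  · simp only [card_empty, Nat.cast_zero]
    positivity
  have hS0 : (0 : ℝ) < #S := by exact_mod_cast hS.card_pos
  have hsum : ∑ v ∈ S, (#{w ∈ S | T v w} : ℝ) ≤ #S * x := by
    simpa using sum_le_card_nsmul S _ x h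
  have hcard := hT.two_mul_sum_card_out S
  refine le_of_mul_le_mul_left ?_ hS0
  linarith

/-- The transitive sequences of length `k` in the vertex set `S`. -/
def transSeqs (T : V → V → Prop) [DecidableRel T] (k : ℕ) (S : Finset V) :
    Finset (Fin k → V) :=
  {f ∈ Fintype.piFinset fun _ => S | IsTransSeq T f}

lemma mem_transSeqs {k : ℕ} {S : Finset V} {f : Fin k → V} :
    f ∈ transSeqs T k S ↔ (∀ i, f i ∈ S) ∧ IsTransSeq T f := by
  simp [transSeqs]

lemma card_transSeqs_le (k : ℕ) (S : Finset V) : #(transSeqs T k S) ≤ #S ^ k := by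
  simpa [transSeqs] using card_filter_le (Fintype.piFinset fun _ : Fin k => S) (IsTransSeq T)

lemma card_transSeqs_zero (S : Finset V) : #(transSeqs T 0 S) = 1 :=
  card_eq_one.2 ⟨Fin.elim0, eq_singleton_iff_unique_mem.2
    ⟨mem_transSeqs.2 ⟨fun i => i.elim0, fun i => i.elim0⟩, fun _ _ => Subsingleton.elim _ _⟩⟩

lemma sum_card_transSeqs_le (k : ℕ) (S : Finset V) :
    ∑ x ∈ S, #(transSeqs T k {y ∈ S | T x y}) ≤ #(transSeqs T (k + 1) S) := by
  rw [← card_sigma]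
  refine card_le_card_of_injOn (fun p => Fin.cons p.1 p.2) ?_ ?_
  · rintro ⟨x, f⟩ h
    simp only [coe_sigma, Set.mem_sigma_iff, mem_coe, mem_transSeqs, mem_filter] at h ⊢
    obtain ⟨hx, hf, hT⟩ := h
    exact ⟨Fin.cases (by simpa using hx) fun i => by simpa using (hf i).1,
      hT.cons fun i => (hf i).2⟩
  · rintro ⟨x, f⟩ _ ⟨y, g⟩ _ h
    obtain ⟨rfl, rfl⟩ := Fin.cons_inj.1 h
    rfl

end TransitiveSequences

section Counting

lemma card_mul_pow_max_sum_sub_le {ι : Type*} (S : Finset ι) (d : ι → ℝ) (a : ℝ) (k : ℕ) :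
    #S * max (∑ x ∈ S, d x - #S * a) 0 ^ k ≤ #S ^ k * ∑ x ∈ S, max (d x - a) 0 ^ k := by
  have hsum : max (∑ x ∈ S, d x - #S * a) 0 ≤ ∑ x ∈ S, max (d x - a) 0 := by
    refine max_le ?_ (sum_nonneg fun _ _ => le_max_right _ _)
    calc ∑ x ∈ S, d x - #S * a = ∑ x ∈ S, (d x - a) := by simp [sum_sub_distrib]
      _ ≤ _ := sum_le_sum fun _ _ => le_max_left _ _
  calc #S * max (∑ x ∈ S, d x - #S * a) 0 ^ k
      ≤ #S * (∑ x ∈ S, max (d x - a) 0) ^ k := by gcongr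
    _ ≤ #S ^ k * ∑ x ∈ S, max (d x - a) 0 ^ k := by
      rcases S.eq_empty_or_nonempty with rfl | hS
      · simp
      rcases k with _ | k
      · simp
      have hjensen := pow_sum_div_card_le_sum_pow (s := S) (f := fun x => max (d x - a) 0)
        (fun _ _ => le_max_right _ _) k
      rw [div_le_iff₀' (by positivity)] at hjensen
      rw [pow_succ' (#S : ℝ) k, mul_assoc]
      gcongr

lemma IsTournament.pow_le_card_transSeqs {V : Type*} {T : V → V → Prop} [DecidableRel T]
    (hT : IsTournament T) (k : ℕ) (S : Finset V) :
    max ((#S : ℝ) - (2 ^ k - 1)) 0 ^ k ≤ 2 ^ k ^ 2 * #(transSeqs T k S) := by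
  induction k generalizing S with
  | zero => simp [card_transSeqs_zero]
  | succ k ih =>
    set N : ℝ := ((#S : ℕ) : ℝ)
    set D : ℝ := max (N - (2 ^ (k + 1) - 1)) 0
    have hD0 : 0 ≤ D := le_max_right _ _
    have hpow : (1 : ℝ) ≤ 2 ^ (k + 1) := one_le_pow₀ one_le_two
    have hDN : D ≤ N := max_le (by linarith) (Nat.cast_nonneg _)
    rcases (Nat.cast_nonneg (#S) : 0 ≤ N).eq_or_lt with hN | hN
    · rw [le_antisymm (hDN.trans hN.ge) hD0, zero_pow k.succ_ne_zero]
      positivity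
    have hout : ∑ x ∈ S, (#{y ∈ S | T x y} : ℝ) - N * (2 ^ k - 1) =
        N / 2 * (N - (2 ^ (k + 1) - 1)) := by
      linear_combination (hT.two_mul_sum_card_out S) / 2
    have hjensen := card_mul_pow_max_sum_sub_le S (fun x => (#{y ∈ S | T x y} : ℝ)) (2 ^ k - 1) k
    rw [hout, ← mul_zero (N / 2), ← mul_max_of_nonneg _ _ (by positivity), mul_zero] at hjensen
    have hND : N * D ^ k ≤ 2 ^ k * ∑ x ∈ S, max ((#{y ∈ S | T x y} : ℝ) - (2 ^ k - 1)) 0 ^ k := by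
      refine le_of_mul_le_mul_left ?_ (pow_pos hN k)
      calc N ^ k * (N * D ^ k) = 2 ^ k * (N * (N / 2 * D) ^ k) := by
            rw [mul_pow, div_pow]
            field_simp
        _ ≤ 2 ^ k * _ := mul_le_mul_of_nonneg_left hjensen (by positivity)
        _ = _ := mul_left_comm _ _ _
    calc D ^ (k + 1) = D * D ^ k := pow_succ' _ _
      _ ≤ N * D ^ k := by gcongr
      _ ≤ 2 ^ k * ∑ x ∈ S, max ((#{y ∈ S | T x y} : ℝ) - (2 ^ k - 1)) 0 ^ k := hND
      _ ≤ 2 ^ k * ∑ x ∈ S, 2 ^ k ^ 2 * (#(transSeqs T k {y ∈ S | T x y}) : ℝ) := by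
        gcongr with x
        exact ih _
      _ = 2 ^ (k ^ 2 + k) * ((∑ x ∈ S, #(transSeqs T k {y ∈ S | T x y}) : ℕ) : ℝ) := by
        push_cast
        rw [← mul_sum, pow_add]
        ring
      _ ≤ 2 ^ (k + 1) ^ 2 * #(transSeqs T (k + 1) S) :=
        mul_le_mul (pow_le_pow_right₀ one_le_two (by nlinarith))
          (Nat.cast_le.2 (sum_card_transSeqs_le k S)) (Nat.cast_nonneg _) (by positivity)

lemma IsTournament.exists_isTransSeq {V : Type*} {T : V → V → Prop} (hT : IsTournament T)
    {k : ℕ} {S : Finset V} (hS : 2 ^ k ≤ #S) :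
    ∃ f : Fin k → V, (∀ i, f i ∈ S) ∧ IsTransSeq T f := by
  classical
  have hS' : (2 : ℝ) ^ k ≤ #S := by exact_mod_cast hS
  have hpos : 0 < max ((#S : ℝ) - (2 ^ k - 1)) 0 := lt_max_of_lt_left (by linarith)
  have hcard := (pow_pos hpos k).trans_le (hT.pow_le_card_transSeqs k S)
  obtain ⟨f, hf⟩ := card_pos.1 (Nat.cast_pos.1 (pos_of_mul_pos_right hcard (by positivity)))
  exact ⟨f, mem_transSeqs.1 hf⟩

end Counting

section KovariSosTuran

lemma rpow_two_sub_one_div_pow {x : ℝ} (hx : 0 ≤ x) (k : ℕ) :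
    (x ^ ((2 : ℝ) - 1 / ((k + 1 : ℕ) : ℝ))) ^ (k + 1) = x ^ k * x ^ (k + 1) := by
  rw [← Real.rpow_natCast, ← Real.rpow_mul hx, ← pow_add, ← Real.rpow_natCast]
  congr 1
  push_cast
  field_simp
  ring

lemma self_le_rpow_two_sub_one_div {x : ℝ} (hx : 1 ≤ x) (s : ℕ) :
    x ≤ x ^ ((2 : ℝ) - 1 / s) := by
  refine Real.self_le_rpow_of_one_le hx ?_
  have := Nat.cast_inv_le_one (α := ℝ) s
  rw [one_div]
  linarith

variable {V β : Type*} {T : V → V → Prop} [DecidableRel T] {R : V → β → Prop}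
  [∀ x, DecidablePred (R x)]

lemma sum_card_transSeqs_eq (s : ℕ) (X : Finset V) (Y : Finset β) :
    ∑ y ∈ Y, #(transSeqs T s {x ∈ X | R x y}) =
      ∑ f ∈ transSeqs T s X, #{y ∈ Y | ∀ i, R (f i) y} := by
  refine .trans (sum_congr rfl fun y _ => congrArg card ?_)
    (sum_card_bipartiteAbove_eq_sum_card_bipartiteBelow
      fun (f : Fin s → V) y => ∀ i, R (f i) y).symm
  ext f
  simp only [mem_transSeqs, mem_filter, mem_bipartiteBelow, forall_and]
  tauto

lemma IsTournament.card_mul_pow_max_card_sub_le (hT : IsTournament T) (s : ℕ) (X : Finset V)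
    (Y : Finset β) :
    #Y * max ((#{p ∈ X ×ˢ Y | R p.1 p.2} : ℝ) - #Y * (2 ^ s - 1)) 0 ^ s ≤
      #Y ^ s * (2 ^ s ^ 2 * ∑ f ∈ transSeqs T s X, (#{y ∈ Y | ∀ i, R (f i) y} : ℝ)) := by
  have hdegree : (#{p ∈ X ×ˢ Y | R p.1 p.2} : ℝ) = ∑ y ∈ Y, (#{x ∈ X | R x y} : ℝ) := by
    rw [card_filter, sum_product_right]
    push_cast [card_filter]
    rfl
  rw [hdegree]
  refine (card_mul_pow_max_sum_sub_le Y _ _ s).trans ?_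
  gcongr
  rw [← Nat.cast_sum, ← sum_card_transSeqs_eq, Nat.cast_sum, mul_sum]
  gcongr
  exact hT.pow_le_card_transSeqs s _

lemma IsTournament.mul_pow_le_sum_card_common (hT : IsTournament T) {k M m : ℕ} (hM : 1 ≤ M)
    (hm : 1 ≤ m) {X : Finset V} {Y : Finset β} (hY : #Y ≤ m)
    (hR : 2 ^ (k + 2) * M * (m : ℝ) ^ ((2 : ℝ) - 1 / ((k + 1 : ℕ) : ℝ)) ≤
      #{p ∈ X ×ˢ Y | R p.1 p.2}) :
    (M : ℝ) * m ^ (k + 1) ≤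
      ∑ f ∈ transSeqs T (k + 1) X, (#{y ∈ Y | ∀ i, R (f i) y} : ℝ) := by
  set r : ℝ := (m : ℝ) ^ ((2 : ℝ) - 1 / ((k + 1 : ℕ) : ℝ))
  have hm0 : (0 : ℝ) < m := by exact_mod_cast hm
  have hM1 : (1 : ℝ) ≤ M := by exact_mod_cast hM
  have hr0 : 0 < r := by positivity
  have hY0 : (0 : ℝ) < #Y := by
    have hcard : (0 : ℝ) < #{p ∈ X ×ˢ Y | R p.1 p.2} := hR.trans_lt' (by positivity)
    obtain ⟨p, hp⟩ := card_pos.1 (Nat.cast_pos.1 hcard)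
    exact_mod_cast card_pos.2 ⟨p.2, (mem_product.1 (mem_filter.1 hp).1).2⟩
  have hYm : (#Y : ℝ) ≤ m := by exact_mod_cast hY
  have hYr : #Y * ((2 : ℝ) ^ (k + 1) - 1) ≤ M * r * 2 ^ (k + 1) :=
    mul_le_mul (by nlinarith [self_le_rpow_two_sub_one_div (Nat.one_le_cast.2 hm) (k + 1)])
      (by linarith) (sub_nonneg.2 (one_le_pow₀ one_le_two)) (by positivity)
  refine le_of_mul_le_mul_left ?_ (by positivity : (0 : ℝ) < #Y * (m ^ k * 2 ^ (k + 1) ^ 2))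
  calc (#Y * (m ^ k * 2 ^ (k + 1) ^ 2)) * ((M : ℝ) * m ^ (k + 1))
      ≤ #Y * (m ^ k * 2 ^ (k + 1) ^ 2) * ((M : ℝ) ^ (k + 1) * m ^ (k + 1)) := by
        gcongr
        exact le_self_pow₀ hM1 k.succ_ne_zero
    _ = #Y * (M * r * 2 ^ (k + 1)) ^ (k + 1) := by
        rw [mul_pow, mul_pow, rpow_two_sub_one_div_pow hm0.le]
        ring
    _ ≤ #Y * max ((#{p ∈ X ×ˢ Y | R p.1 p.2} : ℝ) - #Y * (2 ^ (k + 1) - 1)) 0 ^ (k + 1) := by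
        gcongr
        refine le_max_of_le_left ?_
        rw [pow_succ _ (k + 1)] at hR
        linarith
    _ ≤ _ := hT.card_mul_pow_max_card_sub_le (k + 1) X Y
    _ ≤ #Y * (m ^ k * 2 ^ (k + 1) ^ 2) * _ := by
        rw [pow_succ' (#Y : ℝ) k, mul_assoc, mul_assoc, mul_assoc]
        gcongr

/-- The Kővári–Sós–Turán bound. The transitive `s`-sequences replace the `s`-subsets of one
side. -/
lemma IsTournament.exists_transSeq_common (hT : IsTournament T) {s M m : ℕ} (hs : 1 ≤ s)
    (hM : 1 ≤ M) (hm : 1 ≤ m) {X : Finset V} {Y : Finset β} (hX : #X ≤ m) (hY : #Y ≤ m)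
    (hR : 2 ^ (s + 1) * M * (m : ℝ) ^ ((2 : ℝ) - 1 / s) ≤ #{p ∈ X ×ˢ Y | R p.1 p.2}) :
    ∃ f ∈ transSeqs T s X, M ≤ #{y ∈ Y | ∀ i, R (f i) y} := by
  obtain ⟨k, rfl⟩ := Nat.exists_eq_add_of_le' hs
  have hsum := hT.mul_pow_le_sum_card_common hM hm hY hR
  have hne : (transSeqs T (k + 1) X).Nonempty :=
    nonempty_of_sum_ne_zero (hsum.trans_lt' (by positivity)).ne'
  refine exists_le_of_sum_le hne ?_
  rw [sum_const, smul_eq_mul]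
  have hcard : #(transSeqs T (k + 1) X) ≤ m ^ (k + 1) :=
    (card_transSeqs_le _ _).trans (Nat.pow_le_pow_left hX _)
  refine (Nat.mul_le_mul_right _ hcard).trans ?_
  rw [mul_comm]
  exact_mod_cast hsum

end KovariSosTuran

section UnavoidablePattern

variable {V : Type*} {T : V → V → Prop} {t : ℕ}

lemma uPat_or_uPat_of_ne {p q : Fin 3 × Fin t} (h : p ≠ q) : UPat t p q ∨ UPat t q p := by
  have hcyc : ∀ a b : Fin 3, a = b ∨ b = a + 1 ∨ a = b + 1 := by decide
  rcases hcyc p.1 q.1 with hab | hab | hab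
  · rcases lt_or_gt_of_ne fun hij => h (Prod.ext hab hij) with hij | hij
    · exact .inl (.inl ⟨hab, hij⟩)
    · exact .inr (.inl ⟨hab.symm, hij⟩)
  · exact .inl (.inr hab)
  · exact .inr (.inr hab)

lemma IsTournament.containsU_of_seqs (hT : IsTournament T) {f : Fin 3 → Fin t → V}
    (hf : ∀ a, IsTransSeq T (f a)) (hcyc : ∀ a i j, T (f a i) (f (a + 1) j)) :
    ContainsU T t := by
  have hmap : ∀ p q : Fin 3 × Fin t, UPat t p q → T (f p.1 p.2) (f q.1 q.2) := by
    rintro ⟨a, i⟩ ⟨b, j⟩ (⟨hab, hij⟩ | hab)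
    · obtain rfl : a = b := hab
      exact hf a i j hij
    · obtain rfl : b = a + 1 := hab
      exact hcyc a i j
  refine ⟨fun p => f p.1 p.2, fun p q hpq => ?_, hmap⟩
  by_contra hne
  simp only at hpq
  rcases uPat_or_uPat_of_ne hne with h | h <;>
    exact hT.1 (f p.1 p.2) (by simpa only [hpq] using hmap _ _ h)

lemma IsTournament.containsU_of_finsets (hT : IsTournament T) {A : Fin 3 → Finset V}
    (hA : ∀ a, 2 ^ t ≤ #(A a)) (hcyc : ∀ a, ∀ x ∈ A a, ∀ y ∈ A (a + 1), T x y) :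
    ContainsU T t := by
  choose f hfA hf using fun a => hT.exists_isTransSeq (hA a)
  exact hT.containsU_of_seqs hf fun a i j => hcyc a _ (hfA a i) _ (hfA (a + 1) j)

/-- The `2 * s` vertices of `a` and `b` together supply one class of `𝒰_t`. -/
lemma IsTournament.containsU_of_four_seqs (hT : IsTournament T) {s : ℕ} (hst : t ≤ s + s)
    {a b : Fin s → V} {v w : Fin t → V} (ha : IsTransSeq T a) (hb : IsTransSeq T b)
    (hv : IsTransSeq T v) (hw : IsTransSeq T w) (hab : ∀ i j, T (a i) (b j))
    (hav : ∀ i j, T (a i) (v j)) (hbv : ∀ i j, T (b i) (v j)) (hvw : ∀ i j, T (v i) (w j))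
    (hwa : ∀ i j, T (w i) (a j)) (hwb : ∀ i j, T (w i) (b j)) : ContainsU T t := by
  have happend (P : V → Prop) (hPa : ∀ i, P (a i)) (hPb : ∀ i, P (b i)) (i : Fin t) :
      P (Fin.append a b (Fin.castLE hst i)) := by
    induction Fin.castLE hst i using Fin.addCases with
    | left i => simpa only [Fin.append_left] using hPa i
    | right i => simpa only [Fin.append_right] using hPb i
  refine hT.containsU_of_seqs (f := ![fun i => Fin.append a b (Fin.castLE hst i), v, w])
    (fun c => ?_) (fun c i j => ?_)
  · fin_cases c
    exacts [(ha.append hb hab).castLE hst, hv, hw]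
  · fin_cases c
    exacts [happend (T · (v j)) (hav · j) (hbv · j) i, hvw i j, happend (T (w i)) (hwa i) (hwb i) j]

end UnavoidablePattern

section CompleteSubgraphs

lemma card_le_card_filter_of_le_sum {ι : Type*} {S : Finset ι} {d : ι → ℝ} {N c : ℝ} (hN : 0 < N)
    (hc : 0 ≤ c) (hd : ∀ x ∈ S, d x ≤ N) (h : 2 * c * N * #S ≤ ∑ x ∈ S, d x) :
    c * #S ≤ #{x ∈ S | c * N ≤ d x} := by
  have hle : ∀ x ∈ S, d x ≤ c * N + if c * N ≤ d x then N else 0 := by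
    intro x hx
    split_ifs with hlarge
    · exact (hd x hx).trans (le_add_of_nonneg_left (by positivity))
    · linarith
  have hsum := sum_le_sum hle
  rw [sum_add_distrib, ← sum_filter, sum_const, sum_const, nsmul_eq_mul, nsmul_eq_mul] at hsum
  refine le_of_mul_le_mul_left ?_ hN
  linarith

lemma exists_subset_card_common {α β : Type*} {R : α → β → Prop} [∀ a, DecidablePred (R a)]
    {F : Finset α} {B : Finset β} {c : ℝ} {M : ℕ} (hM : 1 ≤ M) (hMF : M ≤ #F)
    (hcF : 2 * M ≤ c * #F) (h : ∀ f ∈ F, c * #B ≤ #{b ∈ B | R f b}) :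
    ∃ S ⊆ F, #S = M ∧ c / 2 ^ (#F + 1) * #B ≤ #{b ∈ B | ∀ f ∈ S, R f b} := by
  classical
  have hF0 : (0 : ℝ) < #F := by exact_mod_cast hM.trans hMF
  have hc : 0 ≤ c := nonneg_of_mul_nonneg_left (hcF.trans' (by positivity)) hF0
  set G := {b ∈ B | c / 2 * #F ≤ #{f ∈ F | R f b}}
  have hG : c / 2 * #B ≤ #G := by
    refine card_le_card_filter_of_le_sum hF0 (by positivity)
      (fun b _ => Nat.cast_le.2 (card_filter_le F (R · b))) ?_
    have hdouble : ∑ f ∈ F, #{b ∈ B | R f b} = ∑ b ∈ B, #{f ∈ F | R f b} :=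
      sum_card_bipartiteAbove_eq_sum_card_bipartiteBelow R
    rw [← Nat.cast_sum, ← hdouble, Nat.cast_sum]
    have hsum := card_nsmul_le_sum _ _ _ h
    rw [nsmul_eq_mul] at hsum
    linarith
  have hex : ∀ b ∈ G, ∃ S ∈ powersetCard M F, ∀ f ∈ S, R f b := by
    intro b hb
    have hcard : (M : ℝ) ≤ #{f ∈ F | R f b} := (mem_filter.1 hb).2.trans' (by linarith)
    obtain ⟨S, hS, hSM⟩ := exists_subset_card_eq (Nat.cast_le.1 hcard)
    exact ⟨S, mem_powersetCard.2 ⟨hS.trans (filter_subset _ _), hSM⟩,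
      fun f hf => (mem_filter.1 (hS hf)).2⟩
  choose! g hg hgR using hex
  have hne : (powersetCard M F).Nonempty := powersetCard_nonempty.2 hMF
  have hpos : (0 : ℝ) < #(powersetCard M F) := by exact_mod_cast hne.card_pos
  obtain ⟨S, hS, hSG⟩ := exists_le_card_fiber_of_nsmul_le_card_of_maps_to (M := ℝ)
    (b := #G / #(powersetCard M F)) hg hne (by rw [nsmul_eq_mul, mul_div_cancel₀ _ hpos.ne'])
  refine ⟨S, (mem_powersetCard.1 hS).1, (mem_powersetCard.1 hS).2, ?_⟩
  calc c / 2 ^ (#F + 1) * #B = c / 2 * #B / 2 ^ #F := by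
        rw [pow_succ]
        field_simp
    _ ≤ #G / #(powersetCard M F) := by
        gcongr
        rw [card_powersetCard]
        exact_mod_cast Nat.choose_le_two_pow _ _
    _ ≤ #{b ∈ G | g b = S} := hSG
    _ ≤ #{b ∈ B | ∀ f ∈ S, R f b} := by
        gcongr
        intro b hb
        obtain ⟨hbG, rfl⟩ := mem_filter.1 hb
        exact mem_filter.2 ⟨(mem_filter.1 hbG).1, hgR b hbG⟩

universe u v w

lemma exists_complete_bipartite {M : ℕ} (hM : 1 ≤ M) {c : ℝ} (hc : 0 < c) :
    ∃ Q : ℕ, ∃ c' > (0 : ℝ), ∀ {α : Type u} {β : Type v} (R : α → β → Prop)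
      [∀ a, DecidablePred (R a)] (F : Finset α) (B : Finset β),
      Q ≤ #F → (∀ f ∈ F, c * #B ≤ #{b ∈ B | R f b}) →
        ∃ S ⊆ F, #S = M ∧ c' * #B ≤ #{b ∈ B | ∀ f ∈ S, R f b} := by
  refine ⟨max M ⌈2 * M / c⌉₊, c / 2 ^ (max M ⌈2 * M / c⌉₊ + 1), by positivity,
    fun R _ F B hF h => ?_⟩
  obtain ⟨F', hF', hcard⟩ := exists_subset_card_eq hF
  obtain ⟨S, hS, hSM, hSB⟩ := exists_subset_card_common hM (hcard ▸ le_max_left _ _)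
    (by
      rw [← div_le_iff₀' hc, hcard]
      exact (Nat.le_ceil _).trans (Nat.cast_le.2 (le_max_right _ _)))
    fun f hf => h f (hF' hf)
  exact ⟨S, hS.trans hF', hSM, hcard ▸ hSB⟩

lemma exists_complete_tripartite {M : ℕ} (hM : 1 ≤ M) {c : ℝ} (hc : 0 < c) :
    ∃ Q : ℕ, ∀ {α : Type u} {β : Type v} {γ : Type w} (R : α → β → γ → Prop)
      [∀ a, DecidableRel (R a)] (F : Finset α) (X : Finset β) (Y : Finset γ),
      Q ≤ #F → Q ≤ #X → Q ≤ #Y →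
      (∀ f ∈ F, c * (#X * #Y) ≤ #{p ∈ X ×ˢ Y | R f p.1 p.2}) →
      ∃ A ⊆ F, ∃ B ⊆ X, ∃ C ⊆ Y, #A = M ∧ #B = M ∧ #C = M ∧
        ∀ a ∈ A, ∀ b ∈ B, ∀ z ∈ C, R a b z := by
  obtain ⟨Q₁, c₁, hc₁, hQ₁⟩ := exists_complete_bipartite.{u, max v w} hM hc
  obtain ⟨Q₂, c₂, hc₂, hQ₂⟩ := exists_complete_bipartite.{v, w} hM (half_pos hc₁)
  refine ⟨Q₁ + ⌈Q₂ / (c₁ / 2)⌉₊ + ⌈M / c₂⌉₊ + 1, fun R _ F X Y hF hX hY h => ?_⟩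
  obtain ⟨A, hA, hAM, hAc⟩ := hQ₁ (fun f (p : _ × _) => R f p.1 p.2) F (X ×ˢ Y) (by omega)
    (by simpa using h)
  have hY0 : (0 : ℝ) < #Y := by exact_mod_cast (by omega : 0 < #Y)
  have hdegree : (#{p ∈ X ×ˢ Y | ∀ f ∈ A, R f p.1 p.2} : ℝ) =
      ∑ x ∈ X, (#{y ∈ Y | ∀ f ∈ A, R f x y} : ℝ) := by
    simp_rw [card_filter, sum_product]
    push_cast
    rfl
  have hX' := card_le_card_filter_of_le_sum (S := X) hY0 (half_pos hc₁).le
    (fun x _ => Nat.cast_le.2 (card_filter_le Y fun y => ∀ f ∈ A, R f x y)) (by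
      rw [← hdegree]
      refine hAc.trans' (le_of_eq ?_)
      rw [card_product]
      push_cast
      ring)
  have hQ₂X : (Q₂ : ℝ) ≤ c₁ / 2 * #X := by
    rw [← div_le_iff₀' (half_pos hc₁)]
    exact (Nat.le_ceil _).trans (Nat.cast_le.2 (by omega))
  obtain ⟨B, hB, hBM, hBc⟩ := hQ₂ (fun x y => ∀ f ∈ A, R f x y) _ Y
    (Nat.cast_le.1 (hQ₂X.trans hX')) fun x hx => (mem_filter.1 hx).2
  have hMY : (M : ℝ) ≤ c₂ * #Y := by
    rw [← div_le_iff₀' hc₂]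
    exact (Nat.le_ceil _).trans (Nat.cast_le.2 (by omega))
  obtain ⟨C, hC, hCM⟩ := exists_subset_card_eq (Nat.cast_le.1 (hMY.trans hBc))
  exact ⟨A, hA, B, hB.trans (filter_subset _ _), C, hC.trans (filter_subset _ _), hAM, hBM, hCM,
    fun a ha b hb z hz => (mem_filter.1 (hC hz)).2 b hb a ha⟩

lemma exists_monochromatic_product (κ : Type*) [Finite κ] [Nonempty κ] {M : ℕ} (hM : 1 ≤ M) :
    ∃ N, ∀ φ : Fin N → Fin N → κ, ∃ a, ∃ S S' : Finset (Fin N), #S = M ∧ #S' = M ∧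
      ∀ p ∈ S, ∀ q ∈ S', φ p q = a := by
  classical
  have := Fintype.ofFinite κ
  have hκ : 0 < Fintype.card κ := Fintype.card_pos
  obtain ⟨Q, c, hc, hQ⟩ := exists_complete_bipartite (Nat.mul_pos hκ hM)
    (c := 1 / Fintype.card κ) (by positivity)
  set N := max Q ⌈M / c⌉₊
  refine ⟨N, fun φ => ?_⟩
  have hmajority : ∀ p, ∃ a, 1 / Fintype.card κ * (#(univ : Finset (Fin N)) : ℝ) ≤
      #{q | φ p q = a} := by
    intro p
    obtain ⟨a, -, ha⟩ := exists_le_card_fiber_of_nsmul_le_card_of_maps_to (M := ℝ)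
      (s := univ) (b := 1 / Fintype.card κ * (#(univ : Finset (Fin N)) : ℝ)) (f := φ p)
      (fun _ _ => mem_univ _) univ_nonempty
      (by rw [nsmul_eq_mul, card_univ, ← mul_assoc, mul_one_div_cancel (by positivity), one_mul])
    exact ⟨a, ha⟩
  choose col hcol using hmajority
  obtain ⟨P, -, hPM, hPc⟩ := hQ (fun p q => φ p q = col p) univ univ (by simp [N]) fun p _ => hcol p
  obtain ⟨a, -, ha⟩ := exists_le_card_fiber_of_mul_le_card_of_maps_to (s := P) (f := col) (n := M)
    (fun _ _ => mem_univ _) univ_nonempty hPM.ge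
  obtain ⟨S, hS, hSM⟩ := exists_subset_card_eq ha
  have hMN : (M : ℝ) ≤ c * #(univ : Finset (Fin N)) := by
    rw [← div_le_iff₀' hc, card_fin]
    exact (Nat.le_ceil _).trans (Nat.cast_le.2 (le_max_right _ _))
  obtain ⟨S', hS', hSM'⟩ := exists_subset_card_eq (Nat.cast_le.1 (hMN.trans hPc))
  refine ⟨a, S, S', hSM, hSM', fun p hp q hq => ?_⟩
  have hpS := hS hp
  have hqS' := hS' hq
  simp only [mem_filter] at hpS hqS'
  exact (hqS'.2 p hpS.1).trans hpS.2

end CompleteSubgraphs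

section CyclicTriangles

/-- The pairs in `W` completing `v` to a cyclic triangle, listed in the order of traversal
from `v`. -/
def cyclicPairs {V : Type*} (T : V → V → Prop) [DecidableRel T] (W : Finset V) (v : V) :
    Finset (V × V) :=
  {p ∈ W ×ˢ W | T v p.1 ∧ T p.1 p.2 ∧ T p.2 v}

lemma card_cyclicPairs_le {V : Type*} (T : V → V → Prop) [DecidableRel T] (W : Finset V) (v : V) :
    #(cyclicPairs T W v) ≤ #W ^ 2 := by
  simpa only [cyclicPairs, card_product, sq] using card_filter_le (W ×ˢ W) _

universe u

lemma exists_card_filter_cyclicPairs_le (t : ℕ) {c : ℝ} (hc : 0 < c) :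
    ∃ Q : ℕ, ∀ {V : Type u} {T : V → V → Prop} [DecidableRel T], IsTournament T →
      ¬ ContainsU T t → ∀ W : Finset V, #{v ∈ W | c * #W ^ 2 ≤ #(cyclicPairs T W v)} ≤ Q := by
  obtain ⟨Q, hQ⟩ := exists_complete_tripartite.{u, u, u} (Nat.one_le_two_pow (n := t)) hc
  refine ⟨Q, fun {V T} _ hT hU W => ?_⟩
  by_contra! hcard
  have hW : Q ≤ #W := hcard.le.trans (card_filter_le _ _)
  obtain ⟨A, -, B, -, C, -, hA, hB, hC, hABC⟩ :=
    hQ (fun v x y => T v x ∧ T x y ∧ T y v) _ W W hcard.le hW hW fun v hv => by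
      rw [← sq]
      exact (mem_filter.1 hv).2
  have hne {S : Finset V} (hS : #S = 2 ^ t) : S.Nonempty := card_pos.1 (hS ▸ by positivity)
  obtain ⟨⟨a₀, ha₀⟩, ⟨b₀, hb₀⟩, ⟨c₀, hc₀⟩⟩ := And.intro (hne hA) (And.intro (hne hB) (hne hC))
  refine hU (hT.containsU_of_finsets (A := ![A, B, C]) (fun i => ?_) fun i x hx y hy => ?_)
  · fin_cases i
    exacts [hA.ge, hB.ge, hC.ge]
  · fin_cases i
    exacts [(hABC x hx y hy c₀ hc₀).1, (hABC a₀ ha₀ x hx y hy).2.1, (hABC y hy b₀ hb₀ x hx).2.2]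

end CyclicTriangles

section LocalOptimality

variable {V : Type*} [LinearOrder V] {T : V → V → Prop} [DecidableRel T]

/-- The backward edges, in the order of `V`, from a vertex of `B` to an earlier vertex of `A`.
Each is recorded as the pair of its head and its tail. -/
def backPairs (T : V → V → Prop) [DecidableRel T] (A B : Finset V) : Finset (V × V) :=
  {p ∈ A ×ˢ B | p.1 < p.2 ∧ T p.2 p.1}

lemma mem_backPairs {A B : Finset V} {p : V × V} :
    p ∈ backPairs T A B ↔ p.1 ∈ A ∧ p.2 ∈ B ∧ p.1 < p.2 ∧ T p.2 p.1 := by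
  simp [backPairs, and_assoc]

/-- No stable sort of an interval by an integer-valued key decreases the number of backward
edges inside this interval. -/
def IsLocallyOptimal (T : V → V → Prop) [DecidableRel T] : Prop :=
  ∀ W : Finset V, (W : Set V).OrdConnected → ∀ f : V → ℤ,
    #(backPairs T W W) ≤
      #{p ∈ W ×ˢ W | toLex (f p.1, p.1) < toLex (f p.2, p.2) ∧ T p.2 p.1}

lemma IsLocallyOptimal.card_later_in_le_card_later_out (hT : IsLocallyOptimal T) {W : Finset V}
    (hW : (W : Set V).OrdConnected) {v : V} (hv : v ∈ W) :
    #{y ∈ W | v < y ∧ T y v} ≤ #{y ∈ W | v < y ∧ T v y} := by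
  -- This key moves `v` to the end of `W`.
  let key (x : V) : ℤ ×ₗ V := toLex (if x = v then 1 else 0, x)
  have hmove := card_sdiff_le_card_sdiff_iff.2 (hT W hW fun x => if x = v then 1 else 0)
  have hlost : {v} ×ˢ {y ∈ W | v < y ∧ T y v} ⊆
      backPairs T W W \ {p ∈ W ×ˢ W | key p.1 < key p.2 ∧ T p.2 p.1} := by
    rintro ⟨x, y⟩ h
    simp only [mem_product, mem_singleton, mem_filter] at h
    obtain ⟨rfl, hy, hxy, hTyx⟩ := h
    simp [key, mem_backPairs, Prod.Lex.toLex_lt_toLex, hv, hy, hxy, hTyx, hxy.ne']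
  have hgained : {p ∈ W ×ˢ W | key p.1 < key p.2 ∧ T p.2 p.1} \ backPairs T W W ⊆
      {y ∈ W | v < y ∧ T v y} ×ˢ {v} := by
    rintro ⟨x, y⟩ h
    simp only [key, mem_sdiff, mem_filter, mem_product, mem_backPairs,
      Prod.Lex.toLex_lt_toLex] at h
    simp only [mem_product, mem_singleton, mem_filter]
    split_ifs at h <;> grind
  simpa using (card_le_card hlost).trans (hmove.trans (card_le_card hgained))

lemma IsLocallyOptimal.card_earlier_out_le_card_earlier_in (hT : IsLocallyOptimal T)
    {W : Finset V} (hW : (W : Set V).OrdConnected) {v : V} (hv : v ∈ W) :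
    #{y ∈ W | y < v ∧ T v y} ≤ #{y ∈ W | y < v ∧ T y v} := by
  -- This key moves `v` to the beginning of `W`.
  let key (x : V) : ℤ ×ₗ V := toLex (if x = v then -1 else 0, x)
  have hmove := card_sdiff_le_card_sdiff_iff.2 (hT W hW fun x => if x = v then -1 else 0)
  have hlost : {y ∈ W | y < v ∧ T v y} ×ˢ {v} ⊆
      backPairs T W W \ {p ∈ W ×ˢ W | key p.1 < key p.2 ∧ T p.2 p.1} := by
    rintro ⟨y, x⟩ h
    simp only [mem_product, mem_singleton, mem_filter] at h
    obtain ⟨⟨hy, hyx, hTxy⟩, rfl⟩ := h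
    simp [key, mem_backPairs, Prod.Lex.toLex_lt_toLex, hv, hy, hyx, hTxy, hyx.ne]
  have hgained : {p ∈ W ×ˢ W | key p.1 < key p.2 ∧ T p.2 p.1} \ backPairs T W W ⊆
      {v} ×ˢ {y ∈ W | y < v ∧ T y v} := by
    rintro ⟨y, x⟩ h
    simp only [key, mem_sdiff, mem_filter, mem_product, mem_backPairs,
      Prod.Lex.toLex_lt_toLex] at h
    simp only [mem_product, mem_singleton, mem_filter]
    split_ifs at h <;> grind
  simpa using (card_le_card hlost).trans (hmove.trans (card_le_card hgained))

lemma sq_card_le_two_mul_card_pairs {α : Type*} {r : α → α → Prop} [DecidableRel r]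
    (hr : ∀ x y, r x y ∨ r y x) {I O : Finset α}
    (h : ∀ x ∈ I, #{y ∈ I | r y x} ≤ #{y ∈ O | r y x}) :
    #I ^ 2 ≤ 2 * #{p ∈ O ×ˢ I | r p.1 p.2} := by
  have hpairs : #{p ∈ O ×ˢ I | r p.1 p.2} = ∑ x ∈ I, #{y ∈ O | r y x} := by
    simp_rw [card_filter, sum_product_right]
  have hswap : ∑ x ∈ I, #{y ∈ I | r x y} = ∑ x ∈ I, #{y ∈ I | r y x} :=
    sum_card_bipartiteAbove_eq_sum_card_bipartiteBelow r
  have htotal : ∀ x ∈ I, #I ≤ #{y ∈ I | r y x} + #{y ∈ I | r x y} := by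
    intro x _
    classical
    refine (card_le_card fun y hy => ?_).trans (card_union_le _ _)
    simpa [hy] using hr y x
  calc #I ^ 2 = ∑ _x ∈ I, #I := by rw [sum_const, smul_eq_mul, sq]
    _ ≤ ∑ x ∈ I, (#{y ∈ I | r y x} + #{y ∈ I | r x y}) := sum_le_sum htotal
    _ = 2 * ∑ x ∈ I, #{y ∈ I | r y x} := by rw [sum_add_distrib, hswap, two_mul]
    _ ≤ 2 * #{p ∈ O ×ˢ I | r p.1 p.2} := by
      rw [hpairs]
      exact Nat.mul_le_mul_left _ (sum_le_sum h)

lemma IsLocallyOptimal.sq_card_later_in_le (hT : IsTournament T) (hopt : IsLocallyOptimal T)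
    {W : Finset V} (hW : (W : Set V).OrdConnected) {v : V} (hv : v ∈ W) :
    #{y ∈ W | v < y ∧ T y v} ^ 2 ≤ 2 * (#(cyclicPairs T W v) + #(backPairs T W W)) := by
  refine (sq_card_le_two_mul_card_pairs (r := (· ≤ ·)) (O := {y ∈ W | v < y ∧ T v y}) le_total
    fun x hx => ?_).trans (Nat.mul_le_mul_left 2 ?_)
  · rw [filter_comm _ (· ≤ x), filter_comm _ (· ≤ x)]
    refine hopt.card_later_in_le_card_later_out ?_ (mem_filter.2 ⟨hv, (mem_filter.1 hx).2.1.le⟩)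
    rw [coe_filter]
    exact hW.inter Set.ordConnected_Iic
  · refine (card_le_card fun p hp => ?_).trans (card_union_le _ _)
    simp only [mem_filter, mem_product, mem_union, cyclicPairs, mem_backPairs] at hp ⊢
    obtain ⟨⟨⟨hoW, -, hvo⟩, hiW, -, hiv⟩, hle⟩ := hp
    have hne : p.1 ≠ p.2 := fun heq => hT.asymm hvo (heq ▸ hiv)
    by_cases hoi : T p.1 p.2
    · exact .inl ⟨⟨hoW, hiW⟩, hvo, hoi, hiv⟩
    · exact .inr ⟨hoW, hiW, hle.lt_of_ne hne, hT.of_not hne hoi⟩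

lemma IsLocallyOptimal.sq_card_earlier_out_le (hT : IsTournament T) (hopt : IsLocallyOptimal T)
    {W : Finset V} (hW : (W : Set V).OrdConnected) {v : V} (hv : v ∈ W) :
    #{y ∈ W | y < v ∧ T v y} ^ 2 ≤ 2 * (#(cyclicPairs T W v) + #(backPairs T W W)) := by
  refine (sq_card_le_two_mul_card_pairs (r := (· ≥ ·)) (O := {y ∈ W | y < v ∧ T y v})
    (fun x y => le_total y x) fun x hx => ?_).trans (Nat.mul_le_mul_left 2 ?_)
  · rw [filter_comm _ (· ≥ x), filter_comm _ (· ≥ x)]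
    refine hopt.card_earlier_out_le_card_earlier_in ?_
      (mem_filter.2 ⟨hv, (mem_filter.1 hx).2.1.le⟩)
    rw [coe_filter]
    exact hW.inter Set.ordConnected_Ici
  · refine (card_le_card_of_injOn Prod.swap (fun p hp => ?_) Prod.swap_injective.injOn).trans
      (card_union_le _ _)
    simp only [mem_coe, mem_filter, mem_product, mem_union, cyclicPairs, mem_backPairs,
      Prod.fst_swap, Prod.snd_swap] at hp ⊢
    obtain ⟨⟨⟨hiW, -, hiv⟩, hoW, -, hvo⟩, hle⟩ := hp
    have hne : p.2 ≠ p.1 := fun heq => hT.asymm hvo (heq ▸ hiv)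
    by_cases hoi : T p.2 p.1
    · exact .inl ⟨⟨hoW, hiW⟩, hvo, hoi, hiv⟩
    · exact .inr ⟨hoW, hiW, hle.lt_of_ne hne, hT.of_not hne hoi⟩

/-- The edge between `u` and `v` is directed from the later of the two to the earlier one. -/
def IsBackward (T : V → V → Prop) (u v : V) : Prop :=
  (u < v ∧ T v u) ∨ (v < u ∧ T u v)

instance : DecidableRel (IsBackward T) :=
  fun u v => inferInstanceAs (Decidable ((u < v ∧ T v u) ∨ (v < u ∧ T u v)))

/-- The number of backward edges between `v` and `W`. -/
def backDegree (T : V → V → Prop) [DecidableRel T] (W : Finset V) (v : V) : ℕ :=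
  #{y ∈ W | IsBackward T v y}

lemma IsLocallyOptimal.sq_backDegree_le (hT : IsTournament T) (hopt : IsLocallyOptimal T)
    {W : Finset V} (hW : (W : Set V).OrdConnected) {v : V} (hv : v ∈ W) :
    backDegree T W v ^ 2 ≤ 8 * (#(cyclicPairs T W v) + #(backPairs T W W)) := by
  have hsplit : backDegree T W v ≤ #{y ∈ W | v < y ∧ T y v} + #{y ∈ W | y < v ∧ T v y} := by
    refine (card_le_card fun y hy => ?_).trans (card_union_le _ _)
    rw [mem_union, mem_filter, mem_filter, ← and_or_left]
    exact mem_filter.1 hy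
  calc backDegree T W v ^ 2
      ≤ (#{y ∈ W | v < y ∧ T y v} + #{y ∈ W | y < v ∧ T v y}) ^ 2 := Nat.pow_le_pow_left hsplit 2
    _ ≤ 2 * (#{y ∈ W | v < y ∧ T y v} ^ 2 + #{y ∈ W | y < v ∧ T v y} ^ 2) := add_sq_le
    _ ≤ 2 * (2 * (#(cyclicPairs T W v) + #(backPairs T W W)) +
          2 * (#(cyclicPairs T W v) + #(backPairs T W W))) := by
        gcongr
        · exact hopt.sq_card_later_in_le hT hW hv
        · exact hopt.sq_card_earlier_out_le hT hW hv
    _ = 8 * (#(cyclicPairs T W v) + #(backPairs T W W)) := by ring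

end LocalOptimality

section FewBackwardEdges

variable {V : Type*} {T : V → V → Prop} [DecidableRel T]

/-- The out-neighbours of `u` in `W` that are not out-neighbours of `v`. -/
def outDiff (T : V → V → Prop) [DecidableRel T] (W : Finset V) (u v : V) : Finset V :=
  {w ∈ W | T u w ∧ ¬ T v w}

lemma mem_outDiff {W : Finset V} {u v w : V} : w ∈ outDiff T W u v ↔ w ∈ W ∧ T u w ∧ ¬ T v w :=
  mem_filter

lemma card_outDiff_le_card_outDiff {W : Finset V} {u v : V}
    (h : #{w ∈ W | T u w} ≤ #{w ∈ W | T v w}) : #(outDiff T W u v) ≤ #(outDiff T W v u) := by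
  classical
  simpa only [outDiff, filter_and_not] using card_sdiff_le_card_sdiff_iff.2 h

lemma IsTournament.card_le_of_card_outDiff_le (hT : IsTournament T) {W S : Finset V} (u : V)
    {x : ℝ} (hx : 0 ≤ x) (hSW : S ⊆ W) (h₁ : ∀ v ∈ S, #(outDiff T W v u) ≤ x)
    (h₂ : ∀ v ∈ S, #(outDiff T W u v) ≤ x) : #S ≤ 4 * x + 2 := by
  have hin : #{w ∈ S | T u w} ≤ 2 * x + 1 := by
    let _ : DecidableRel (Function.swap T) := fun v w => inferInstanceAs (Decidable (T w v))
    refine hT.swap.card_le_of_forall_card_out_le hx fun v hv => le_trans ?_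
      (h₂ v (mem_filter.1 hv).1)
    refine mod_cast card_le_card fun w hw => ?_
    simp only [mem_filter, Function.swap] at hw
    exact mem_outDiff.2 ⟨hSW hw.1.1, hw.1.2, hT.asymm hw.2⟩
  have hout : #{w ∈ S | ¬ T u w} ≤ 2 * x + 1 := by
    refine hT.card_le_of_forall_card_out_le hx fun v hv => le_trans ?_ (h₁ v (mem_filter.1 hv).1)
    refine mod_cast card_le_card fun w hw => ?_
    simp only [mem_filter] at hw
    exact mem_outDiff.2 ⟨hSW hw.1.1, hw.2, hw.1.2⟩
  have hsplit : (#{w ∈ S | T u w} + #{w ∈ S | ¬ T u w} : ℝ) = #S :=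
    mod_cast card_filter_add_card_filter_not (s := S) (T u)
  linarith

lemma IsTournament.sum_card_outDiff_le (hT : IsTournament T) (W : Finset V) :
    ∑ p ∈ W ×ˢ W with T p.2 p.1, #(outDiff T W p.1 p.2) ≤ ∑ v ∈ W, #(cyclicPairs T W v) := by
  rw [← card_sigma, ← card_sigma]
  refine card_le_card_of_injOn (fun z => ⟨z.1.1, (z.2, z.1.2)⟩) ?_ ?_
  · rintro ⟨⟨v, u⟩, w⟩ hz
    simp only [coe_sigma, Set.mem_sigma_iff, mem_coe, mem_filter, mem_product, mem_outDiff,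
      cyclicPairs] at hz ⊢
    obtain ⟨⟨⟨hv, hu⟩, hTuv⟩, hw, hTvw, hTuw⟩ := hz
    have hne : u ≠ w := fun heq => hT.asymm hTuv (heq ▸ hTvw)
    exact ⟨hv, ⟨hw, hu⟩, hTvw, hT.of_not hne hTuw, hTuv⟩
  · rintro ⟨⟨v, u⟩, w⟩ _ ⟨⟨v', u'⟩, w'⟩ _ h
    simp only [Sigma.mk.injEq, heq_eq_eq, Prod.mk.injEq] at h
    obtain ⟨rfl, rfl, rfl⟩ := h
    rfl

lemma IsTournament.card_filter_card_outDiff_le (hT : IsTournament T) (W : Finset V) {x : ℝ}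
    (hx : 0 ≤ x) :
    #{p ∈ W ×ˢ W | #(outDiff T W p.1 p.2) ≤ x ∧ #(outDiff T W p.2 p.1) ≤ x} ≤
      #W * (4 * x + 2) := by
  rw [card_filter, sum_product_right]
  simp only [← card_filter, Nat.cast_sum]
  rw [← nsmul_eq_mul]
  refine sum_le_card_nsmul W _ _ fun u _ =>
    hT.card_le_of_card_outDiff_le u hx (filter_subset _ W) ?_ ?_
  · exact fun v hv => (mem_filter.1 hv).2.1
  · exact fun v hv => (mem_filter.1 hv).2.2

universe u

lemma IsLocallyOptimal.card_backPairs_le {V : Type*} [LinearOrder V] {T : V → V → Prop}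
    [DecidableRel T] (hT : IsTournament T) (hopt : IsLocallyOptimal T) {W : Finset V}
    (hW : (W : Set V).OrdConnected) {x : ℝ} (hx : 0 < x) :
    #(backPairs T W W) ≤ (∑ v ∈ W, #(cyclicPairs T W v) : ℝ) / x + #W * (4 * x + 2) := by
  have hsort : #(backPairs T W W) ≤
      #{p ∈ W ×ˢ W | #{w ∈ W | T p.2 w} ≤ #{w ∈ W | T p.1 w} ∧ T p.2 p.1} := by
    refine (hopt W hW fun v => -#{w ∈ W | T v w}).trans (card_le_card fun p hp => ?_)
    simp only [mem_filter, Prod.Lex.toLex_lt_toLex] at hp ⊢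
    refine ⟨hp.1, ?_, hp.2.2⟩
    omega
  have hfar : #{p ∈ W ×ˢ W | T p.2 p.1 ∧ x < #(outDiff T W p.1 p.2)} ≤
      (∑ v ∈ W, #(cyclicPairs T W v) : ℝ) / x := by
    rw [le_div_iff₀ hx, ← nsmul_eq_mul, ← filter_filter]
    refine (card_nsmul_le_sum _ (fun p => (#(outDiff T W p.1 p.2) : ℝ)) x
      fun p hp => (mem_filter.1 hp).2.le).trans ?_
    refine (sum_le_sum_of_subset_of_nonneg (filter_subset _ _) fun _ _ _ => by positivity).trans ?_
    exact_mod_cast hT.sum_card_outDiff_le W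
  refine le_trans ?_ (add_le_add hfar (hT.card_filter_card_outDiff_le W hx.le))
  refine mod_cast hsort.trans ((card_le_card fun p hp => ?_).trans (card_union_le _ _))
  simp only [mem_filter, mem_union] at hp ⊢
  obtain ⟨hpW, hdeg, hTp⟩ := hp
  rcases lt_or_ge x #(outDiff T W p.1 p.2) with hlt | hge
  · exact .inl ⟨hpW, hTp, hlt⟩
  · exact .inr ⟨hpW, hge, (Nat.cast_le.2 (card_outDiff_le_card_outDiff hdeg)).trans hge⟩

lemma sum_le_of_card_filter_le {α : Type*} {S : Finset α} {d : α → ℝ} {c N Q : ℝ} (hc : 0 ≤ c)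
    (hN : 0 ≤ N) (hd : ∀ x ∈ S, d x ≤ N) (hQ : #{x ∈ S | c ≤ d x} ≤ Q) :
    ∑ x ∈ S, d x ≤ #S * c + Q * N := by
  have hlarge : ∑ x ∈ S with c ≤ d x, d x ≤ Q * N :=
    (sum_le_card_nsmul _ d N fun x hx => hd x (mem_filter.1 hx).1).trans
      (by rw [nsmul_eq_mul]; gcongr)
  have hsmall : ∑ x ∈ S with ¬ c ≤ d x, d x ≤ #S * c := by
    refine (sum_le_card_nsmul _ d c fun x hx => (not_le.1 (mem_filter.1 hx).2).le).trans ?_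
    rw [nsmul_eq_mul]
    gcongr
    exact filter_subset _ _
  rw [← sum_filter_add_sum_filter_not S (c ≤ d ·)]
  linarith

lemma exists_card_backPairs_le (t : ℕ) {ε : ℝ} (hε : 0 < ε) :
    ∃ L : ℕ, ∀ {V : Type u} [LinearOrder V] {T : V → V → Prop} [DecidableRel T],
      IsTournament T → IsLocallyOptimal T → ¬ ContainsU T t → ∀ W : Finset V,
        (W : Set V).OrdConnected → L ≤ #W → #(backPairs T W W) ≤ ε * #W ^ 2 := by
  obtain ⟨Q, hQ⟩ := exists_card_filter_cyclicPairs_le.{u} t (c := ε ^ 2 / 64) (by positivity)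
  refine ⟨⌈8 / ε⌉₊ + ⌈64 * Q / ε ^ 2⌉₊, fun {V _ T _} hT hopt hU W hW hL => ?_⟩
  have hL' : (⌈8 / ε⌉₊ + ⌈64 * Q / ε ^ 2⌉₊ : ℝ) ≤ #W := mod_cast hL
  have hW₁ : 8 / ε ≤ #W := by
    linarith [Nat.le_ceil (8 / ε), Nat.cast_nonneg (α := ℝ) ⌈64 * Q / ε ^ 2⌉₊]
  have hW₂ : 64 * Q / ε ^ 2 ≤ #W := by
    linarith [Nat.le_ceil (64 * Q / ε ^ 2), Nat.cast_nonneg (α := ℝ) ⌈8 / ε⌉₊]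
  have hW₀ : (0 : ℝ) < #W := lt_of_lt_of_le (by positivity) hW₁
  have hcyc : ∑ v ∈ W, (#(cyclicPairs T W v) : ℝ) ≤ #W * (ε ^ 2 / 64 * #W ^ 2) + Q * #W ^ 2 :=
    sum_le_of_card_filter_le (by positivity) (by positivity)
      (fun v _ => mod_cast card_cyclicPairs_le T W v) (mod_cast hQ hT hU W)
  rw [div_le_iff₀ (by positivity)] at hW₁ hW₂
  calc (#(backPairs T W W) : ℝ)
      ≤ (∑ v ∈ W, #(cyclicPairs T W v) : ℝ) / (ε * #W / 16) +
          #W * (4 * (ε * #W / 16) + 2) := hopt.card_backPairs_le hT hW (by positivity)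
    _ ≤ (#W * (ε ^ 2 / 64 * #W ^ 2) + Q * #W ^ 2) / (ε * #W / 16) +
          #W * (4 * (ε * #W / 16) + 2) := by gcongr
    _ = ε * #W ^ 2 / 2 + #W * (64 * Q) / (4 * ε) + #W * 8 / 4 := by
        field_simp
        ring
    _ ≤ ε * #W ^ 2 / 2 + #W * (#W * ε ^ 2) / (4 * ε) + #W * (#W * ε) / 4 := by gcongr
    _ = ε * #W ^ 2 := by
        field_simp
        ring

/-- The vertices of `W` incident with more than `#W / k` backward edges inside `W`. -/
def largeBackDegree {V : Type*} [LinearOrder V] (T : V → V → Prop) [DecidableRel T] (k : ℕ)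
    (W : Finset V) : Finset V :=
  {v ∈ W | #W < k * backDegree T W v}

lemma exists_card_largeBackDegree_le (t : ℕ) {k : ℕ} (hk : 0 < k) :
    ∃ Q : ℕ, ∀ {V : Type u} [LinearOrder V] {T : V → V → Prop} [DecidableRel T],
      IsTournament T → IsLocallyOptimal T → ¬ ContainsU T t → ∀ W : Finset V,
        (W : Set V).OrdConnected → #(largeBackDegree T k W) ≤ Q := by
  have hε : 0 < 1 / (16 * (k : ℝ) ^ 2) := by positivity
  obtain ⟨L, hL⟩ := exists_card_backPairs_le.{u} t hε
  obtain ⟨Q, hQ⟩ := exists_card_filter_cyclicPairs_le.{u} t hε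
  refine ⟨max L Q, fun {V _ T _} hT hopt hU W hW => ?_⟩
  rcases le_total #W L with hWL | hWL
  · exact ((card_filter_le _ _).trans hWL).trans (le_max_left _ _)
  refine ((card_le_card fun v hv => ?_).trans (hQ hT hU W)).trans (le_max_right _ _)
  obtain ⟨hvW, hv⟩ := mem_filter.1 hv
  refine mem_filter.2 ⟨hvW, ?_⟩
  have hback := hL hT hopt hU W hW hWL
  have hsq : (backDegree T W v : ℝ) ^ 2 ≤ 8 * (#(cyclicPairs T W v) + #(backPairs T W W)) :=
    mod_cast hopt.sq_backDegree_le hT hW hvW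
  have hlarge : (#W : ℝ) ^ 2 / k ^ 2 ≤ (backDegree T W v : ℝ) ^ 2 := by
    rw [div_le_iff₀ (by positivity), ← mul_pow, mul_comm]
    exact pow_le_pow_left₀ (by positivity) (mod_cast hv.le) 2
  have hdiv : 1 / (16 * (k : ℝ) ^ 2) * #W ^ 2 = #W ^ 2 / k ^ 2 / 16 := by
    field_simp
  linarith

end FewBackwardEdges

section Gaps

section LinearOrder

variable {V : Type*} [LinearOrder V] {T : V → V → Prop}

lemma IsBackward.symm {u v : V} (h : IsBackward T u v) : IsBackward T v u :=
  Or.symm h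

lemma IsBackward.of_lt {u v : V} (h : IsBackward T u v) (hlt : u < v) : T v u :=
  (h.resolve_right fun h' => hlt.asymm h'.1).2

lemma IsTournament.of_not_isBackward (hT : IsTournament T) {u v : V} (h : ¬ IsBackward T u v)
    (hlt : u < v) : T u v :=
  hT.of_not hlt.ne' fun hvu => h (.inl ⟨hlt, hvu⟩)

lemma IsTournament.containsU_of_gap [DecidableRel T] (hT : IsTournament T) {t : ℕ}
    {A G B W : Finset V} (hA : #A = 2 ^ t) (hB : #B = 2 ^ t) (hG : 2 * 2 ^ t ≤ #G) (hGW : G ⊆ W)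
    (hAG : ∀ x ∈ A, ∀ z ∈ G, x < z) (hGB : ∀ z ∈ G, ∀ y ∈ B, z < y)
    (hBA : ∀ x ∈ A, ∀ y ∈ B, T y x)
    (hdeg : ∀ v ∈ A ∪ B, 4 * 2 ^ t * backDegree T W v ≤ #G) : ContainsU T t := by
  let Z : Finset V := {z ∈ G | (∀ x ∈ A, T x z) ∧ ∀ y ∈ B, T z y}
  have hcover : G ⊆ Z ∪ (A ∪ B).biUnion fun v => {y ∈ W | IsBackward T v y} := by
    intro z hz
    by_contra hcon
    simp only [mem_union, mem_biUnion, mem_filter, not_or, not_exists, not_and, Z] at hcon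
    obtain ⟨hzZ, hfwd⟩ := hcon
    obtain ⟨y, hy, hzy⟩ : ∃ y ∈ B, ¬ T z y := by
      by_contra! h
      exact hzZ hz (fun x hx => hT.of_not_isBackward (hfwd x (.inl hx) (hGW hz)) (hAG x hx z hz)) h
    exact hzy (hT.of_not_isBackward (fun h => hfwd y (.inr hy) (hGW hz) h.symm) (hGB z hz y hy))
  have hcard : #G ≤ #Z + ∑ v ∈ A ∪ B, backDegree T W v :=
    (card_le_card hcover).trans ((card_union_le _ _).trans
      (Nat.add_le_add_left card_biUnion_le _))
  have hsum : 2 * 2 ^ t * (2 * ∑ v ∈ A ∪ B, backDegree T W v) ≤ 2 * 2 ^ t * #G := by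
    calc 2 * 2 ^ t * (2 * ∑ v ∈ A ∪ B, backDegree T W v)
        = ∑ v ∈ A ∪ B, 4 * 2 ^ t * backDegree T W v := by rw [← mul_sum]; ring
      _ ≤ #(A ∪ B) * #G := sum_le_card_nsmul _ _ _ hdeg
      _ ≤ 2 * 2 ^ t * #G := by
        refine Nat.mul_le_mul_right _ ((card_union_le _ _).trans ?_)
        omega
  have hsum' := Nat.le_of_mul_le_mul_left hsum (by positivity)
  refine hT.containsU_of_finsets (A := ![A, Z, B]) (fun i => ?_) fun i x hx y hy => ?_
  · fin_cases i
    exacts [hA.ge, (by omega : 2 ^ t ≤ #Z), hB.ge]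
  · fin_cases i
    exacts [(mem_filter.1 hy).2.1 x hx, (mem_filter.1 hx).2.2 y hy, hBA y hy x hx]

end LinearOrder

variable {n : ℕ}

/-- The positions in the `p`-th to `q`-th of the consecutive blocks of length `m`
partitioning `Fin n`. -/
def blocks (m p q : ℕ) : Finset (Fin n) :=
  {v | p * m ≤ v ∧ v < (q + 1) * m}

/-- The positions in the `p`-th of the consecutive blocks of length `m` partitioning `Fin n`. -/
def block (m p : ℕ) : Finset (Fin n) :=
  blocks m p p

lemma mem_blocks {m p q : ℕ} {v : Fin n} : v ∈ blocks m p q ↔ p * m ≤ v ∧ v < (q + 1) * m := by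
  simp [blocks]

lemma mem_block {m p : ℕ} {v : Fin n} : v ∈ block m p ↔ p * m ≤ v ∧ v < (p + 1) * m :=
  mem_blocks

lemma block_subset_blocks {m p q r : ℕ} (hpr : p ≤ r) (hrq : r ≤ q) :
    (block m r : Finset (Fin n)) ⊆ blocks m p q := by
  intro v hv
  rw [mem_block] at hv
  exact mem_blocks.2 ⟨(Nat.mul_le_mul_right m hpr).trans hv.1,
    hv.2.trans_le (Nat.mul_le_mul_right m (by omega))⟩

lemma lt_of_mem_block {m p q : ℕ} {x y : Fin n} (h : p < q) (hx : x ∈ block m p)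
    (hy : y ∈ block m q) : x < y :=
  (mem_block.1 hx).2.trans_le ((Nat.mul_le_mul_right m h).trans (mem_block.1 hy).1)

lemma ordConnected_blocks (m p q : ℕ) :
    ((blocks m p q : Finset (Fin n)) : Set (Fin n)).OrdConnected :=
  ⟨fun _ hx _ hy _ hz => mem_blocks.2
    ⟨(mem_blocks.1 hx).1.trans hz.1, (Fin.le_def.1 hz.2).trans_lt (mem_blocks.1 hy).2⟩⟩

lemma card_blocks_le (m p q : ℕ) : #(blocks m p q : Finset (Fin n)) ≤ (q + 1 - p) * m := by
  rw [Nat.sub_mul, ← Nat.card_Ico, ← card_map Fin.valEmbedding]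
  refine card_le_card fun w hw => ?_
  obtain ⟨v, hv, rfl⟩ := mem_map.1 hw
  exact mem_Ico.2 (mem_blocks.1 hv)

lemma card_block_le (m p : ℕ) : #(block m p : Finset (Fin n)) ≤ m := by
  simpa [block] using card_blocks_le (n := n) m p p

lemma le_card_blocks {m p q : ℕ} (h : (q + 1) * m ≤ n) :
    (q + 1 - p) * m ≤ #(blocks m p q : Finset (Fin n)) := by
  rw [Nat.sub_mul, ← Nat.card_Ico, ← card_map Fin.valEmbedding]
  refine card_le_card fun v hv => ?_
  rw [mem_Ico] at hv
  exact mem_map.2 ⟨⟨v, hv.2.trans_le h⟩, mem_blocks.2 hv, rfl⟩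

variable {T : Fin n → Fin n → Prop} [DecidableRel T]

lemma IsTournament.containsU_of_blocks (hT : IsTournament T) {t m p q : ℕ}
    {A B : Finset (Fin n)} (hm : 2 ^ (t + 1) ≤ m) (hpq : p + 2 ≤ q) (hA : A ⊆ block m p)
    (hB : B ⊆ block m q) (hAcard : #A = 2 ^ t) (hBcard : #B = 2 ^ t)
    (hBA : ∀ x ∈ A, ∀ y ∈ B, T y x)
    (hdeg : Disjoint (A ∪ B) (largeBackDegree T (12 * 2 ^ t) (blocks m p q))) :
    ContainsU T t := by
  obtain ⟨k, rfl⟩ := Nat.exists_eq_add_of_le hpq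
  obtain ⟨y, hy⟩ := card_pos.1 (hBcard ▸ Nat.two_pow_pos t)
  have hG : (k + 1) * m ≤ #(blocks m (p + 1) (p + 1 + k) : Finset (Fin n)) := by
    have := le_card_blocks (p := p + 1) (q := p + 1 + k)
      (((mem_block.1 (hB hy)).1.trans_lt y.2).le.trans' (Nat.mul_le_mul_right m (by omega)))
    convert this using 2
    omega
  have hW : #(blocks m p (p + 2 + k) : Finset (Fin n)) ≤ (k + 3) * m := by
    convert card_blocks_le m p (p + 2 + k) using 2
    omega
  refine hT.containsU_of_gap (G := blocks m (p + 1) (p + 1 + k)) (W := blocks m p (p + 2 + k))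
    hAcard hBcard ?_ ?_ ?_ ?_ hBA fun v hv => ?_
  · rw [← pow_succ']
    exact (hm.trans (Nat.le_mul_of_pos_left m k.succ_pos)).trans hG
  · intro z hz
    rw [mem_blocks] at hz ⊢
    constructor <;> nlinarith
  · intro x hx z hz
    exact (mem_block.1 (hA hx)).2.trans_le (mem_blocks.1 hz).1
  · intro z hz y hy
    refine (mem_blocks.1 hz).2.trans_le (le_trans (le_of_eq ?_) (mem_block.1 (hB hy)).1)
    ring
  · have hvW : v ∈ blocks m p (p + 2 + k) := by
      rcases mem_union.1 hv with hv | hv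
      · exact block_subset_blocks le_rfl (by omega) (hA hv)
      · exact block_subset_blocks (by omega) le_rfl (hB hv)
    have hsmall : 12 * 2 ^ t * backDegree T (blocks m p (p + 2 + k)) v ≤
        #(blocks m p (p + 2 + k) : Finset (Fin n)) := by
      by_contra! h
      exact disjoint_left.1 hdeg hv (mem_filter.2 ⟨hvW, h⟩)
    nlinarith

lemma IsTournament.containsU_of_isBackward (hT : IsTournament T) {t m p q : ℕ}
    {A B : Finset (Fin n)} (hm : 2 ^ (t + 1) ≤ m) (hpq : p + 2 ≤ q ∨ q + 2 ≤ p)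
    (hA : A ⊆ block m p) (hB : B ⊆ block m q) (hAcard : #A = 2 ^ t) (hBcard : #B = 2 ^ t)
    (hAB : ∀ x ∈ A, ∀ y ∈ B, IsBackward T x y)
    (hdeg : Disjoint (A ∪ B) (largeBackDegree T (12 * 2 ^ t) (blocks m (min p q) (max p q)))) :
    ContainsU T t := by
  wlog hlt : p + 2 ≤ q generalizing A B p q
  · refine this hpq.symm hB hA hBcard hAcard (fun x hx y hy => (hAB y hy x hx).symm) ?_
      (hpq.resolve_left hlt)
    rwa [union_comm, min_comm, max_comm]
  rw [min_eq_left (by omega), max_eq_right (by omega)] at hdeg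
  exact hT.containsU_of_blocks hm hlt hA hB hAcard hBcard (fun x hx y hy =>
    (hAB x hx y hy).of_lt (lt_of_mem_block (by omega) (hA hx) (hB hy))) hdeg

end Gaps

section DisjointBicliques

lemma exists_pairwise_disjoint {α β : Type*} {P : α → Prop} {supp : α → Finset β}
    {k K : ℕ} (hsupp : ∀ a, #(supp a) ≤ k)
    (hP : ∀ B : Finset β, #B ≤ K → ∃ a, P a ∧ Disjoint (supp a) B) (N : ℕ) {D : Finset β}
    (hD : #D + N * k ≤ K) :
    ∃ F : Fin N → α, (∀ i, P (F i)) ∧ (∀ i, Disjoint (supp (F i)) D) ∧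
      Pairwise fun i j => Disjoint (supp (F i)) (supp (F j)) := by
  classical
  induction N generalizing D with
  | zero => exact ⟨Fin.elim0, fun i => i.elim0, fun i => i.elim0, fun i => i.elim0⟩
  | succ N ih =>
    rw [add_one_mul] at hD
    obtain ⟨a, ha, haD⟩ := hP D (by omega)
    obtain ⟨F, hF, hFD, hFF⟩ := ih (D := D ∪ supp a) (by
      have := card_union_le D (supp a)
      have := hsupp a
      omega)
    simp only [disjoint_union_right] at hFD
    refine ⟨Fin.cons a F, Fin.cases ha hF, Fin.cases haD fun i => (hFD i).1, fun i j hij => ?_⟩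
    induction i using Fin.cases with
    | zero =>
      induction j using Fin.cases with
      | zero => exact absurd rfl hij
      | succ j => exact (hFD j).2.symm
    | succ i =>
      induction j using Fin.cases with
      | zero => exact (hFD i).2
      | succ j => exact hFF fun h => hij (congrArg Fin.succ h)

lemma card_filter_product_le_card_filter_sdiff_product_sdiff {α : Type*} [DecidableEq α]
    (R : α → α → Prop) [DecidableRel R] {X Y B : Finset α} {m K : ℕ} (hX : #X ≤ m) (hY : #Y ≤ m)
    (hB : #B ≤ K) :
    #{p ∈ X ×ˢ Y | R p.1 p.2} ≤ #{p ∈ (X \ B) ×ˢ (Y \ B) | R p.1 p.2} + 2 * K * m := by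
  have hcover : {p ∈ X ×ˢ Y | R p.1 p.2} ⊆
      {p ∈ (X \ B) ×ˢ (Y \ B) | R p.1 p.2} ∪ (B ×ˢ Y ∪ X ×ˢ B) := by
    intro p hp
    simp only [mem_filter, mem_product, mem_union, mem_sdiff] at hp ⊢
    tauto
  have hBY : #(B ×ˢ Y) ≤ K * m := card_product B Y ▸ Nat.mul_le_mul hB hY
  have hXB : #(X ×ˢ B) ≤ m * K := card_product X B ▸ Nat.mul_le_mul hX hB
  have hunion := (card_le_card hcover).trans (card_union_le _ _)
  have := card_union_le (B ×ˢ Y) (X ×ˢ B)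
  have hcomm : 2 * K * m = K * m + m * K := by ring
  omega

variable {V : Type*} [LinearOrder V] {T : V → V → Prop} {s t : ℕ}

/-- The two sides of `f` are transitive sequences, in `X` and in `Y` respectively, and all
edges between the two sides are backward. -/
structure IsBackwardBiclique (T : V → V → Prop) (X Y : Finset V) (f : Fin s ⊕ Fin t → V) :
    Prop where
  left_mem : ∀ i, f (.inl i) ∈ X
  right_mem : ∀ j, f (.inr j) ∈ Y
  left_trans : IsTransSeq T fun i => f (.inl i)
  right_trans : IsTransSeq T fun j => f (.inr j)
  isBackward : ∀ i j, IsBackward T (f (.inl i)) (f (.inr j))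

variable [DecidableRel T]

lemma IsTournament.exists_isBackwardBiclique_disjoint (hT : IsTournament T) {m K : ℕ}
    (hs : 1 ≤ s) (hm : 1 ≤ m) {X Y B : Finset V} (hX : #X ≤ m) (hY : #Y ≤ m) (hB : #B ≤ K)
    (hXY : (2 ^ (s + 1) * 2 ^ t + 2 * K) * (m : ℝ) ^ ((2 : ℝ) - 1 / s) ≤
      #{p ∈ X ×ˢ Y | IsBackward T p.1 p.2}) :
    ∃ f : Fin s ⊕ Fin t → V, IsBackwardBiclique T X Y f ∧ Disjoint (univ.image f) B := by
  have hremove : (#{p ∈ X ×ˢ Y | IsBackward T p.1 p.2} : ℝ) ≤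
      #{p ∈ (X \ B) ×ˢ (Y \ B) | IsBackward T p.1 p.2} + 2 * K * m :=
    mod_cast card_filter_product_le_card_filter_sdiff_product_sdiff _ hX hY hB
  have hmr : (2 * K * m : ℝ) ≤ 2 * K * (m : ℝ) ^ ((2 : ℝ) - 1 / s) := by
    gcongr
    exact self_le_rpow_two_sub_one_div (mod_cast hm) s
  obtain ⟨f, hf, hcard⟩ := hT.exists_transSeq_common (R := IsBackward T) (M := 2 ^ t) hs
    Nat.one_le_two_pow hm ((card_le_card sdiff_subset).trans hX)
    ((card_le_card sdiff_subset).trans hY) (by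
      push_cast
      rw [add_mul] at hXY
      exact le_of_add_le_add_right (hXY.trans (hremove.trans (by gcongr))))
  obtain ⟨g, hgY, hg⟩ := hT.exists_isTransSeq hcard
  obtain ⟨hfX, hf⟩ := mem_transSeqs.1 hf
  simp only [mem_filter, mem_sdiff] at hfX hgY
  refine ⟨Sum.elim f g, ⟨fun i => (hfX i).1, fun j => (hgY j).1.1, hf, hg,
    fun i j => (hgY j).2 i⟩, disjoint_left.2 fun x hx => ?_⟩
  obtain ⟨i | j, -, rfl⟩ := mem_image.1 hx
  exacts [(hfX i).2, (hgY j).1.2]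

lemma IsTournament.exists_isBackwardBiclique_family (hT : IsTournament T) {m K N : ℕ}
    (hs : 1 ≤ s) (hm : 1 ≤ m) {X Y D : Finset V} (hX : #X ≤ m) (hY : #Y ≤ m)
    (hD : #D + N * (s + t) ≤ K)
    (hXY : (2 ^ (s + 1) * 2 ^ t + 2 * K) * (m : ℝ) ^ ((2 : ℝ) - 1 / s) ≤
      #{p ∈ X ×ˢ Y | IsBackward T p.1 p.2}) :
    ∃ F : Fin N → Fin s ⊕ Fin t → V, (∀ i, IsBackwardBiclique T X Y (F i)) ∧
      (∀ i x, F i x ∉ D) ∧ ∀ x, Function.Injective (F · x) := by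
  obtain ⟨F, hF, hFD, hFF⟩ := exists_pairwise_disjoint
    (supp := fun f : Fin s ⊕ Fin t → V => univ.image f)
    (fun f => card_image_le.trans (by simp))
    (fun B hB => hT.exists_isBackwardBiclique_disjoint hs hm hX hY hB hXY) N hD
  have hmem (i x) : F i x ∈ univ.image (F i) := mem_image_of_mem _ (mem_univ x)
  refine ⟨F, hF, fun i x => disjoint_left.1 (hFD i) (hmem i x), fun x i j hij => ?_⟩
  by_contra hne
  have hij : F i x = F j x := hij
  exact disjoint_left.1 (hFF hne) (hmem i x) (hij ▸ hmem j x)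

end DisjointBicliques

section NonCrossing

lemma card_biUnion_univ_le {ι κ β : Type*} [Fintype ι] [Fintype κ] [DecidableEq β]
    {D : ι × κ → Finset β} {Q : ℕ} (hD : ∀ z, #(D z) ≤ Q) :
    #(univ.biUnion D) ≤ Fintype.card ι * Fintype.card κ * Q := by
  simpa using card_biUnion_le_card_mul univ D Q fun z _ => hD z

lemma exists_forall_not_isBackward (t : ℕ) (ι κ : Type*) [Finite ι] [Finite κ] [Nonempty ι]
    [Nonempty κ] :
    ∃ N, ∀ {n : ℕ} {T : Fin n → Fin n → Prop} [DecidableRel T], IsTournament T →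
      ¬ ContainsU T t → ∀ {m : ℕ}, 2 ^ (t + 1) ≤ m → ∀ {a : ι → ℕ} {b : κ → ℕ},
      (∀ x y, a x + 2 ≤ b y ∨ b y + 2 ≤ a x) →
      ∀ {A : Fin N → ι → Fin n} {B : Fin N → κ → Fin n},
      (∀ i x, A i x ∈ block m (a x)) → (∀ j y, B j y ∈ block m (b y)) →
      (∀ x, Function.Injective (A · x)) → (∀ y, Function.Injective (B · y)) →
      (∀ x y, ∀ v ∈ largeBackDegree T (12 * 2 ^ t) (blocks m (min (a x) (b y)) (max (a x) (b y))),
        (∀ i, A i x ≠ v) ∧ ∀ j, B j y ≠ v) →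
      ∃ i j, ∀ x y, ¬ IsBackward T (A i x) (B j y) := by
  obtain ⟨N, hN⟩ := exists_monochromatic_product (ι × κ) (Nat.one_le_two_pow (n := t))
  refine ⟨N, fun {n T _} hT hU {m} hm {a b} hab {A B} hA hB hAinj hBinj hdeg => ?_⟩
  by_contra! hback
  choose x y hxy using hback
  obtain ⟨⟨x₀, y₀⟩, S, S', hS, hS', hconst⟩ := hN fun i j => (x i j, y i j)
  refine hU (hT.containsU_of_isBackward (A := S.image (A · x₀)) (B := S'.image (B · y₀)) hm
    (hab x₀ y₀) (image_subset_iff.2 fun i _ => hA i x₀) (image_subset_iff.2 fun j _ => hB j y₀)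
    ((card_image_of_injective S (hAinj x₀)).trans hS)
    ((card_image_of_injective S' (hBinj y₀)).trans hS') ?_ ?_)
  · simp only [forall_mem_image]
    intro i hi j hj
    obtain ⟨hx, hy⟩ := Prod.mk.inj (hconst i hi j hj)
    exact hx ▸ hy ▸ hxy i j
  · refine disjoint_right.2 fun v hv hvAB => ?_
    obtain ⟨hvA, hvB⟩ := hdeg x₀ y₀ v hv
    rcases mem_union.1 hvAB with h | h
    · obtain ⟨i, -, hi⟩ := mem_image.1 h
      exact hvA i hi
    · obtain ⟨j, -, hj⟩ := mem_image.1 h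
      exact hvB j hj

lemma IsTournament.containsU_of_crossing {n : ℕ} {T : Fin n → Fin n → Prop} (hT : IsTournament T)
    {s t : ℕ} (hst : t ≤ s + s) {m p p' q q' : ℕ} (hpp' : p < p') (hp'q : p' < q) (hqq' : q < q')
    {f g : Fin s ⊕ Fin t → Fin n} (hf : IsBackwardBiclique T (block m p) (block m q) f)
    (hg : IsBackwardBiclique T (block m q') (block m p') g)
    (hfg : ∀ x y, ¬ IsBackward T (f x) (g y)) : ContainsU T t :=
  hT.containsU_of_four_seqs hst hf.left_trans hg.left_trans hg.right_trans hf.right_trans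
    (fun i j => hT.of_not_isBackward (hfg _ _)
      (lt_of_mem_block (hpp'.trans (hp'q.trans hqq')) (hf.left_mem i) (hg.left_mem j)))
    (fun i j => hT.of_not_isBackward (hfg _ _)
      (lt_of_mem_block hpp' (hf.left_mem i) (hg.right_mem j)))
    (fun i j => (hg.isBackward i j).symm.of_lt
      (lt_of_mem_block (hp'q.trans hqq') (hg.right_mem j) (hg.left_mem i)))
    (fun i j => hT.of_not_isBackward (fun h => hfg _ _ h.symm)
      (lt_of_mem_block hp'q (hg.right_mem i) (hf.right_mem j)))
    (fun i j => (hf.isBackward j i).of_lt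
      (lt_of_mem_block (hpp'.trans hp'q) (hf.left_mem j) (hf.right_mem i)))
    (fun i j => hT.of_not_isBackward (hfg _ _)
      (lt_of_mem_block hqq' (hf.right_mem i) (hg.left_mem j)))

lemma card_backPairs_le_card_filter_isBackward {V : Type*} [LinearOrder V] (T : V → V → Prop)
    [DecidableRel T] (X Y : Finset V) :
    #(backPairs T X Y) ≤ #{p ∈ X ×ˢ Y | IsBackward T p.1 p.2} :=
  card_le_card fun _ hz =>
    have ⟨hX, hY, hz⟩ := mem_backPairs.1 hz
    mem_filter.2 ⟨mem_product.2 ⟨hX, hY⟩, .inl hz⟩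

lemma card_backPairs_le_card_filter_isBackward_swap {V : Type*} [LinearOrder V]
    (T : V → V → Prop) [DecidableRel T] (X Y : Finset V) :
    #(backPairs T X Y) ≤ #{p ∈ Y ×ˢ X | IsBackward T p.1 p.2} :=
  card_le_card_of_injOn Prod.swap (fun _ hz =>
    have ⟨hX, hY, hz⟩ := mem_backPairs.1 (mem_coe.1 hz)
    mem_coe.2 (mem_filter.2 ⟨mem_product.2 ⟨hY, hX⟩, .inr hz⟩)) Prod.swap_injective.injOn

lemma exists_not_crossing {s t : ℕ} (hs : 1 ≤ s) (hst : t ≤ s + s) :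
    ∃ C : ℝ, 0 < C ∧ ∀ {n : ℕ} {T : Fin n → Fin n → Prop} [DecidableRel T], IsTournament T →
      IsLocallyOptimal T → ¬ ContainsU T t → ∀ {m : ℕ}, 2 ^ (t + 1) ≤ m →
      ∀ {p p' q q' : ℕ}, p + 2 ≤ p' → p' + 2 ≤ q → q + 2 ≤ q' →
        C * (m : ℝ) ^ ((2 : ℝ) - 1 / s) ≤ #(backPairs T (block m p) (block m q)) →
        ¬ C * (m : ℝ) ^ ((2 : ℝ) - 1 / s) ≤ #(backPairs T (block m p') (block m q')) := by
  have : Nonempty (Fin s ⊕ Fin t) := ⟨.inl ⟨0, hs⟩⟩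
  obtain ⟨N, hN⟩ := exists_forall_not_isBackward t (Fin s ⊕ Fin t) (Fin s ⊕ Fin t)
  obtain ⟨Q, hQ⟩ := exists_card_largeBackDegree_le t (k := 12 * 2 ^ t) (by positivity)
  let K := (s + t) * (s + t) * Q + N * (s + t)
  refine ⟨2 ^ (s + 1) * 2 ^ t + 2 * K, by positivity,
    fun {n T _} hT hopt hU {m} hm {p p' q q'} hpp' hp'q hqq' hpq hpq' => hU ?_⟩
  have hm1 : 1 ≤ m := Nat.one_le_two_pow.trans hm
  let a : Fin s ⊕ Fin t → ℕ := Sum.elim (fun _ => p) fun _ => q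
  let b : Fin s ⊕ Fin t → ℕ := Sum.elim (fun _ => q') fun _ => p'
  let E (z : (Fin s ⊕ Fin t) × (Fin s ⊕ Fin t)) : Finset (Fin n) :=
    largeBackDegree T (12 * 2 ^ t) (blocks m (min (a z.1) (b z.2)) (max (a z.1) (b z.2)))
  have hE : #(univ.biUnion E) + N * (s + t) ≤ K := by
    have := card_biUnion_univ_le (D := E) fun z => hQ hT hopt hU _ (ordConnected_blocks _ _ _)
    simpa [K] using this
  obtain ⟨A, hA, hAE, hAinj⟩ := hT.exists_isBackwardBiclique_family (X := block m p)
    (Y := block m q) hs hm1 (card_block_le m p) (card_block_le m q) hE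
    (hpq.trans (mod_cast card_backPairs_le_card_filter_isBackward T _ _))
  obtain ⟨B, hB, hBE, hBinj⟩ := hT.exists_isBackwardBiclique_family (X := block m q')
    (Y := block m p') hs hm1 (card_block_le m q') (card_block_le m p') hE
    (hpq'.trans (mod_cast card_backPairs_le_card_filter_isBackward_swap T _ _))
  obtain ⟨i, j, hij⟩ := hN hT hU hm (a := a) (b := b)
    (by rintro (x | x) (y | y) <;> simp only [a, b, Sum.elim_inl, Sum.elim_inr] <;> omega)
    (fun i => Sum.rec (hA i).left_mem (hA i).right_mem)
    (fun j => Sum.rec (hB j).left_mem (hB j).right_mem) hAinj hBinj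
    fun x y v hv => by
      have hvE : v ∈ univ.biUnion E := mem_biUnion.2 ⟨(x, y), mem_univ _, hv⟩
      exact ⟨fun i h => hAE i x (h ▸ hvE), fun j h => hBE j y (h ▸ hvE)⟩
  exact hT.containsU_of_crossing hst (by omega) (by omega) (by omega) (hA i) (hB j) hij

end NonCrossing

section Recursion

lemma card_le_card_mul_two {α β : Type*} {H : Finset α} {X : Finset β} {g : α → β} {h : α → ℕ}
    (hg : ∀ z ∈ H, g z ∈ X) (hh : ∀ z ∈ H, ∀ z' ∈ H, g z = g z' → h z ≤ h z' + 1)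
    (hinj : Function.Injective fun z => (g z, h z)) : #H ≤ #X * 2 := by
  rw [← card_range 2, ← card_product]
  refine card_le_card_of_injOn (fun z => (g z, h z % 2))
    (fun z hz => mem_coe.2 (mem_product.2 ⟨hg z hz, mem_range.2 (Nat.mod_lt _ two_pos)⟩))
    fun z hz z' hz' heq => hinj ?_
  obtain ⟨hgz, hmod⟩ := Prod.mk.inj heq
  have := hh z hz z' hz' hgz
  have := hh z' hz' z hz hgz.symm
  exact Prod.ext hgz (by dsimp only; omega)

lemma card_le_of_not_crossing {H : Finset (ℕ × ℕ)} {X Y : Finset ℕ} (hH : H ⊆ X ×ˢ Y)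
    (hle : ∀ z ∈ H, z.1 ≤ z.2)
    (hcross : ∀ {p p' q q'}, p + 2 ≤ p' → p' + 2 ≤ q → q + 2 ≤ q' → (p, q) ∈ H →
      (p', q') ∉ H) :
    #H ≤ 4 * #X + 2 * #Y := by
  classical
  let H₁ : Finset (ℕ × ℕ) := {z ∈ H | ∀ q, z.2 + 2 ≤ q → (z.1, q) ∉ H}
  let H₂ : Finset (ℕ × ℕ) := {z ∈ H | ∀ p, p + 2 ≤ z.1 → (p, z.2) ∉ H}
  let H₃ : Finset (ℕ × ℕ) := {z ∈ H | z.2 ≤ z.1 + 1}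
  have hcover : H ⊆ (H₁ ∪ H₂) ∪ H₃ := by
    rintro ⟨p', q⟩ hz
    by_contra hcon
    simp only [H₁, H₂, H₃, mem_union, mem_filter, hz, true_and, not_or, not_forall,
      not_not] at hcon
    obtain ⟨⟨⟨q', hq, hpq'⟩, ⟨p, hp, hpq⟩⟩, hlong⟩ := hcon
    exact hcross hp (by omega) hq hpq hpq'
  have h₁ : #H₁ ≤ #X * 2 := by
    refine card_le_card_mul_two (g := Prod.fst) (h := Prod.snd)
      (fun z hz => (mem_product.1 (hH (mem_filter.1 hz).1)).1) (fun z hz z' hz' heq => ?_)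
      Function.injective_id
    by_contra! hlt
    exact (mem_filter.1 hz').2 z.2 hlt (heq ▸ (mem_filter.1 hz).1)
  have h₂ : #H₂ ≤ #Y * 2 := by
    refine card_le_card_mul_two (g := Prod.snd) (h := Prod.fst)
      (fun z hz => (mem_product.1 (hH (mem_filter.1 hz).1)).2) (fun z hz z' hz' heq => ?_)
      Prod.swap_injective
    by_contra! hlt
    exact (mem_filter.1 hz).2 z'.1 hlt (heq ▸ (mem_filter.1 hz').1)
  have h₃ : #H₃ ≤ #X * 2 := by
    refine card_le_card_mul_two (g := Prod.fst) (h := Prod.snd)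
      (fun z hz => (mem_product.1 (hH (mem_filter.1 hz).1)).1) (fun z hz z' hz' heq => ?_)
      Function.injective_id
    have := (mem_filter.1 hz).2
    have := hle z' (mem_filter.1 hz').1
    omega
  have := card_le_card hcover
  have := card_union_le (H₁ ∪ H₂) H₃
  have := card_union_le H₁ H₂
  omega

variable {n : ℕ} {T : Fin n → Fin n → Prop} [DecidableRel T]

lemma mem_block_self_div {m : ℕ} (hm : 0 < m) (v : Fin n) : v ∈ block m (v / m) :=
  mem_block.2 ⟨Nat.div_mul_le_self _ _, (Nat.lt_mul_div_succ v hm).trans_eq (mul_comm _ _)⟩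

lemma div_mem_Ico_of_mem_block {m k x : ℕ} (hm : 0 < m) {v : Fin n} (hv : v ∈ block (m * k) x) :
    (v / m : ℕ) ∈ Ico (x * k) ((x + 1) * k) := by
  rw [mem_block, mul_comm m k, ← mul_assoc, ← mul_assoc] at hv
  exact mem_Ico.2 ⟨(Nat.le_div_iff_mul_le hm).2 hv.1, (Nat.div_lt_iff_lt_mul hm).2 hv.2⟩

lemma card_backPairs_block_mul_le (T : Fin n → Fin n → Prop) [DecidableRel T] {m : ℕ} (hm : 0 < m)
    (k x y : ℕ) :
    #(backPairs T (block (m * k) x) (block (m * k) y)) ≤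
      ∑ z ∈ Ico (x * k) ((x + 1) * k) ×ˢ Ico (y * k) ((y + 1) * k),
        #(backPairs T (block m z.1) (block m z.2)) := by
  refine (card_le_card ?_).trans card_biUnion_le
  rintro ⟨v, w⟩ hz
  obtain ⟨hv, hw, hvw⟩ := mem_backPairs.1 hz
  exact mem_biUnion.2 ⟨(v / m, w / m),
    mem_product.2 ⟨div_mem_Ico_of_mem_block hm hv, div_mem_Ico_of_mem_block hm hw⟩,
    mem_backPairs.2 ⟨mem_block_self_div hm v, mem_block_self_div hm w, hvw⟩⟩

lemma le_of_card_backPairs_block_pos {m p q : ℕ}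
    (h : 0 < #(backPairs T (block m p) (block m q))) : p ≤ q := by
  obtain ⟨z, hz⟩ := card_pos.1 h
  obtain ⟨hp, hq, hlt, -⟩ := mem_backPairs.1 hz
  by_contra! hqp
  exact hlt.asymm (lt_of_mem_block hqp hq hp)

lemma card_backPairs_block_le_sq (T : Fin n → Fin n → Prop) [DecidableRel T] (m x y : ℕ) :
    #(backPairs T (block m x) (block m y)) ≤ m ^ 2 := by
  refine (card_filter_le _ _).trans ?_
  rw [card_product, sq]
  exact Nat.mul_le_mul (card_block_le m x) (card_block_le m y)

lemma card_backPairs_block_mul_le_of_not_crossing {m : ℕ} (hm : 0 < m) {θ b : ℝ} (hθ : 0 < θ)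
    (hb : ∀ p q, #(backPairs T (block m p) (block m q)) ≤ b)
    (hcross : ∀ {p p' q q'}, p + 2 ≤ p' → p' + 2 ≤ q → q + 2 ≤ q' →
      θ ≤ #(backPairs T (block m p) (block m q)) →
      ¬ θ ≤ #(backPairs T (block m p') (block m q'))) (k x y : ℕ) :
    #(backPairs T (block (m * k) x) (block (m * k) y)) ≤ k ^ 2 * θ + 6 * k * b := by
  let c (z : ℕ × ℕ) : ℕ := #(backPairs T (block m z.1) (block m z.2))
  let P := Ico (x * k) ((x + 1) * k) ×ˢ Ico (y * k) ((y + 1) * k)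
  let H : Finset (ℕ × ℕ) := {z ∈ P | θ ≤ c z}
  have hIco (r : ℕ) : #(Ico (r * k) ((r + 1) * k)) = k := by
    rw [Nat.card_Ico, ← Nat.sub_mul, Nat.add_sub_cancel_left, one_mul]
  have hP : #P = k ^ 2 := by rw [card_product, hIco, hIco, sq]
  have hH : #H ≤ 6 * k := by
    have := card_le_of_not_crossing (filter_subset (θ ≤ c ·) P)
      (fun z hz => le_of_card_backPairs_block_pos
        (Nat.cast_pos.1 (hθ.trans_le (mem_filter.1 hz).2)))
      fun h₁ h₂ h₃ hpq hpq' => hcross h₁ h₂ h₃ (mem_filter.1 hpq).2 (mem_filter.1 hpq').2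
    rw [hIco, hIco] at this
    exact this.trans_eq (by ring)
  have hc (z) : (c z : ℝ) ≤ θ + if θ ≤ c z then b else 0 := by
    split_ifs with h
    · exact (hb z.1 z.2).trans (le_add_of_nonneg_left hθ.le)
    · exact (not_le.1 h).le.trans_eq (add_zero θ).symm
  have hb0 : 0 ≤ b := (Nat.cast_nonneg _).trans (hb 0 0)
  calc (#(backPairs T (block (m * k) x) (block (m * k) y)) : ℝ)
      ≤ ∑ z ∈ P, (c z : ℝ) := mod_cast card_backPairs_block_mul_le T hm k x y
    _ ≤ ∑ z ∈ P, (θ + if θ ≤ c z then b else 0) := sum_le_sum fun z _ => hc z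
    _ = k ^ 2 * θ + #H * b := by
      rw [sum_add_distrib, ← sum_filter, sum_const, sum_const, hP, nsmul_eq_mul, nsmul_eq_mul,
        Nat.cast_pow]
    _ ≤ k ^ 2 * θ + 6 * k * b := by
      gcongr
      exact mod_cast hH

lemma three_halves_le_two_sub_one_div {s : ℕ} (hs : 2 ≤ s) : (3 / 2 : ℝ) ≤ 2 - 1 / s := by
  have : (1 : ℝ) / s ≤ 1 / 2 := one_div_le_one_div_of_le two_pos (mod_cast hs)
  linarith

lemma twelve_mul_le_rpow {β : ℝ} (hβ : 3 / 2 ≤ β) : (12 : ℝ) * 144 ≤ 144 ^ β :=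
  calc (12 : ℝ) * 144 = 144 ^ (3 / 2 : ℝ) := by
        rw [show (144 : ℝ) = 12 ^ (2 : ℝ) by norm_num, ← Real.rpow_mul (by norm_num)]
        norm_num
    _ ≤ 144 ^ β := Real.rpow_le_rpow_of_exponent_le (by norm_num) hβ

lemma add_le_mul_rpow {C K β r : ℝ} (hK : 0 ≤ K) (hr : 0 ≤ r) (hβ : 3 / 2 ≤ β)
    (hCK : 24 * C ≤ K) :
    144 ^ 2 * (C * r) + 6 * 144 * (K * r) ≤ K * (r * 144 ^ β) := by
  have hCKr : 24 * C * r ≤ K * r := by gcongr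
  calc 144 ^ 2 * (C * r) + 6 * 144 * (K * r)
      ≤ K * (r * (12 * 144)) := by linarith
    _ ≤ K * (r * 144 ^ β) := by
      gcongr
      exact twelve_mul_le_rpow hβ

lemma card_backPairs_block_le_mul_rpow (T : Fin n → Fin n → Prop) [DecidableRel T] {m M : ℕ}
    (hm : 1 ≤ m) (hmM : m ≤ M) {K β : ℝ} (hKM : (M : ℝ) ^ 2 ≤ K) (hβ : 0 ≤ β) (x y : ℕ) :
    #(backPairs T (block m x) (block m y)) ≤ K * (m : ℝ) ^ β :=
  calc (#(backPairs T (block m x) (block m y)) : ℝ)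
      ≤ M ^ 2 := mod_cast (card_backPairs_block_le_sq T m x y).trans (Nat.pow_le_pow_left hmM 2)
    _ ≤ K := hKM
    _ ≤ K * (m : ℝ) ^ β :=
      le_mul_of_one_le_right ((sq_nonneg _).trans hKM) (Real.one_le_rpow (mod_cast hm) hβ)

lemma exists_card_backPairs_block_le {s t : ℕ} (hs : 2 ≤ s) (hst : t ≤ s + s) :
    ∃ K : ℝ, 0 < K ∧ ∀ {n : ℕ} {T : Fin n → Fin n → Prop} [DecidableRel T], IsTournament T →
      IsLocallyOptimal T → ¬ ContainsU T t → ∀ h x y : ℕ,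
      #(backPairs T (block (144 ^ h) x) (block (144 ^ h) y)) ≤
        K * ((144 ^ h : ℕ) : ℝ) ^ ((2 : ℝ) - 1 / s) := by
  obtain ⟨C, hC, hcross⟩ := exists_not_crossing (by omega : 1 ≤ s) hst
  have hβ := three_halves_le_two_sub_one_div hs
  generalize (2 : ℝ) - 1 / s = β at hcross hβ ⊢
  let M := 2 ^ (t + 1) * 144
  let K : ℝ := 24 * C + (M : ℝ) ^ 2
  have hK : 0 < K := by positivity
  have hCK : 24 * C ≤ K := le_add_of_nonneg_right (by positivity)
  have hMK : (M : ℝ) ^ 2 ≤ K := le_add_of_nonneg_left (by positivity)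
  have hβ0 : 0 ≤ β := by linarith
  refine ⟨K, hK, fun {n T _} hT hopt hU h => ?_⟩
  induction h with
  | zero =>
    exact card_backPairs_block_le_mul_rpow T le_rfl (Nat.mul_pos (by positivity) (by norm_num))
      hMK hβ0
  | succ h ih =>
    intro x y
    rw [pow_succ]
    rcases lt_or_ge (144 ^ h) (2 ^ (t + 1)) with hlt | hge
    · exact card_backPairs_block_le_mul_rpow T (Nat.mul_pos (by positivity) (by norm_num))
        (Nat.mul_le_mul_right _ hlt.le) hMK hβ0 x y
    generalize 144 ^ h = m at ih hge ⊢
    have hm : 0 < m := Nat.one_le_two_pow.trans hge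
    calc (#(backPairs T (block (m * 144) x) (block (m * 144) y)) : ℝ)
        ≤ (144 : ℕ) ^ 2 * (C * (m : ℝ) ^ β) + 6 * (144 : ℕ) * (K * (m : ℝ) ^ β) :=
          card_backPairs_block_mul_le_of_not_crossing hm (by positivity) ih
            (hcross hT hopt hU hge) 144 x y
      _ ≤ K * ((m : ℝ) ^ β * 144 ^ β) :=
          mod_cast add_le_mul_rpow hK.le (by positivity) hβ hCK
      _ = K * ((m * 144 : ℕ) : ℝ) ^ β := by
          push_cast
          rw [Real.mul_rpow (by positivity) (by norm_num)]

end Recursion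

section OptimalOrdering

lemma backCount_eq_card {n : ℕ} {V α : Type*} [Fintype V] [LinearOrder α] (T : V → V → Prop)
    [DecidableRel T] {σ : Fin n ≃ V} {key : V → α} (hkey : StrictMono fun i => key (σ i)) :
    backCount T σ = #{p : V × V | key p.1 < key p.2 ∧ T p.2 p.1} := by
  rw [backCount, ← Set.ncard_image_of_injective _ (σ.prodCongr σ).injective,
    ← Set.ncard_coe_finset]
  congr 1
  ext p
  obtain ⟨q, rfl⟩ := (σ.prodCongr σ).surjective p
  rw [(σ.prodCongr σ).injective.mem_set_image, mem_coe, mem_filter_univ]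
  exact and_congr_left' hkey.lt_iff_lt.symm

lemma backCount_refl {n : ℕ} (T : Fin n → Fin n → Prop) [DecidableRel T] :
    backCount T (Equiv.refl _) = #(backPairs T univ univ) :=
  (backCount_eq_card T (key := id) strictMono_id).trans (by rw [backPairs, univ_product_univ]; rfl)

lemma backCount_sort {n : ℕ} {α : Type*} [LinearOrder α] (T : Fin n → Fin n → Prop)
    [DecidableRel T] {key : Fin n → α} (hkey : Function.Injective key) :
    backCount T (Tuple.sort key) = #{p : Fin n × Fin n | key p.1 < key p.2 ∧ T p.2 p.1} :=
  backCount_eq_card T ((Tuple.monotone_sort key).strictMono_of_injective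
    (hkey.comp (Tuple.sort key).injective))

section WindowKey

variable {V : Type*} [LinearOrder V]

/-- Sorting by `windowKey W f` rearranges the interval `W` by increasing `f`, with ties kept in
their original order, and leaves the vertices below and above `W` where they are. -/
def windowKey (W : Finset V) (f : V → ℤ) (v : V) : ℕ ×ₗ ℤ ×ₗ V :=
  if v ∈ W then toLex (1, toLex (f v, v))
  else toLex (if ∃ w ∈ W, v < w then 0 else 2, toLex (0, v))

variable {W : Finset V} {f : V → ℤ}

lemma windowKey_lt_iff_of_mem {u v : V} (hu : u ∈ W) (hv : v ∈ W) :
    windowKey W f u < windowKey W f v ↔ toLex (f u, u) < toLex (f v, v) := by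
  simp only [windowKey, if_pos hu, if_pos hv, Prod.Lex.toLex_lt_toLex, lt_irrefl, false_or,
    true_and]

lemma windowKey_lt_of_lt (hW : (W : Set V).OrdConnected) {u v : V} (h : ¬ (u ∈ W ∧ v ∈ W))
    (huv : u < v) : windowKey W f u < windowKey W f v := by
  by_cases hu : u ∈ W
  · have hv : v ∉ W := fun hv => h ⟨hu, hv⟩
    have habove : ¬ ∃ w ∈ W, v < w := fun ⟨w, hw, hvw⟩ => hv (hW.out hu hw ⟨huv.le, hvw.le⟩)
    simp [windowKey, hu, hv, habove, Prod.Lex.toLex_lt_toLex]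
  · by_cases hv : v ∈ W
    · have hbelow : ∃ w ∈ W, u < w := ⟨v, hv, huv⟩
      simp [windowKey, hu, hv, hbelow, Prod.Lex.toLex_lt_toLex]
    · have hbelow : (∃ w ∈ W, v < w) → ∃ w ∈ W, u < w := fun ⟨w, hw, hvw⟩ =>
        ⟨w, hw, huv.trans hvw⟩
      simp only [windowKey, if_neg hu, if_neg hv, Prod.Lex.toLex_lt_toLex, lt_irrefl, huv,
        false_or, and_true]
      split_ifs <;> simp_all

lemma windowKey_lt_iff_lt (hW : (W : Set V).OrdConnected) {u v : V}
    (h : ¬ (u ∈ W ∧ v ∈ W)) : windowKey W f u < windowKey W f v ↔ u < v := by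
  refine ⟨fun hlt => ?_, windowKey_lt_of_lt hW h⟩
  by_contra! hvu
  rcases hvu.lt_or_eq with hvu | rfl
  · exact hlt.asymm (windowKey_lt_of_lt hW (fun h' => h h'.symm) hvu)
  · exact lt_irrefl _ hlt

lemma windowKey_injective (W : Finset V) (f : V → ℤ) : Function.Injective (windowKey W f) := by
  intro u v huv
  have : (ofLex (ofLex (windowKey W f u)).2).2 = (ofLex (ofLex (windowKey W f v)).2).2 := by
    rw [huv]
  simpa only [windowKey, apply_ite ofLex, apply_ite Prod.snd, ofLex_toLex, ite_self] using this

end WindowKey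

lemma isLocallyOptimal_of_forall_backCount_le {n : ℕ} {T : Fin n → Fin n → Prop} [DecidableRel T]
    (hmin : ∀ τ : Equiv.Perm (Fin n), backCount T (Equiv.refl _) ≤ backCount T τ) :
    IsLocallyOptimal T := by
  intro W hW f
  let inW (p : Fin n × Fin n) : Prop := p.1 ∈ W ∧ p.2 ∈ W
  let before : Finset (Fin n × Fin n) := backPairs T univ univ
  let after : Finset (Fin n × Fin n) :=
    {p | windowKey W f p.1 < windowKey W f p.2 ∧ T p.2 p.1}
  have hle : #before ≤ #after := by
    rw [← backCount_refl, ← backCount_sort T (windowKey_injective W f)]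
    exact hmin _
  have hout : {p ∈ before | ¬ inW p} = {p ∈ after | ¬ inW p} := by
    ext p
    simp only [before, after, mem_filter, mem_backPairs, mem_univ, true_and, and_congr_left_iff]
    exact fun hp _ => (windowKey_lt_iff_lt hW hp).symm
  have hbefore : {p ∈ before | inW p} = backPairs T W W := by
    ext p
    simp only [before, inW, mem_filter, mem_backPairs, mem_univ, true_and]
    tauto
  have hafter : {p ∈ after | inW p} =
      {p ∈ W ×ˢ W | toLex (f p.1, p.1) < toLex (f p.2, p.2) ∧ T p.2 p.1} := by
    ext p
    simp only [after, inW, mem_filter, mem_product, mem_univ, true_and]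
    rw [and_comm, and_congr_right_iff]
    exact fun hp => and_congr_left' (windowKey_lt_iff_of_mem hp.1 hp.2)
  have hsplit (S : Finset (Fin n × Fin n)) : #{p ∈ S | inW p} + #{p ∈ S | ¬ inW p} = #S :=
    card_filter_add_card_filter_not _
  rw [← hsplit before, ← hsplit after, hout, hbefore, hafter] at hle
  exact Nat.le_of_add_le_add_right hle

lemma exists_isLocallyOptimal {n : ℕ} (T : Fin n → Fin n → Prop) [DecidableRel T] :
    ∃ σ : Equiv.Perm (Fin n), IsLocallyOptimal fun i j => T (σ i) (σ j) := by
  obtain ⟨σ, hσ⟩ := Finite.exists_min fun σ : Equiv.Perm (Fin n) => backCount T σ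
  exact ⟨σ, isLocallyOptimal_of_forall_backCount_le fun τ => hσ (τ.trans σ)⟩

lemma exists_backCount_le_of_not_containsU {s t : ℕ} (hs : 2 ≤ s) (hst : t ≤ s + s) :
    ∃ K : ℝ, 0 < K ∧ ∀ {n : ℕ}, 0 < n → ∀ {T : Fin n → Fin n → Prop}, IsTournament T →
      ¬ ContainsU T t → ∃ σ : Equiv.Perm (Fin n),
        backCount T σ ≤ K * (n : ℝ) ^ ((2 : ℝ) - 1 / s) := by
  classical
  obtain ⟨K, hK, hbound⟩ := exists_card_backPairs_block_le hs hst
  have hβ := three_halves_le_two_sub_one_div hs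
  generalize (2 : ℝ) - 1 / s = β at hbound hβ ⊢
  refine ⟨K * 144 ^ β, by positivity, fun {n} hn {T} hT hU => ?_⟩
  obtain ⟨σ, hσ⟩ := exists_isLocallyOptimal T
  let h := Nat.log 144 n + 1
  have hn_lt : n < 144 ^ h := Nat.lt_pow_succ_log_self (by norm_num) n
  have hle : 144 ^ h ≤ 144 * n := by
    rw [pow_succ']
    exact Nat.mul_le_mul_left _ (Nat.pow_log_le_self _ hn.ne')
  have huniv : (block (144 ^ h) 0 : Finset (Fin n)) = univ :=
    eq_univ_of_forall fun v => mem_block.2 ⟨by simp, by simpa using v.2.trans hn_lt⟩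
  have hcount : backCount T σ = #(backPairs (fun i j => T (σ i) (σ j)) univ univ) :=
    backCount_refl fun i j => T (σ i) (σ j)
  refine ⟨σ, ?_⟩
  calc (backCount T σ : ℝ)
      = #(backPairs (fun i j => T (σ i) (σ j)) (block (144 ^ h) 0) (block (144 ^ h) 0)) := by
        rw [hcount, huniv]
    _ ≤ K * ((144 ^ h : ℕ) : ℝ) ^ β :=
        hbound (hT.comp σ.injective) hσ (fun hU' => hU (hU'.of_comp σ.injective)) h 0 0
    _ ≤ K * (144 * n : ℝ) ^ β := by
        gcongr
        exact mod_cast hle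
    _ = K * 144 ^ β * (n : ℝ) ^ β := by
        rw [Real.mul_rpow (by norm_num) (by positivity), mul_assoc]

end OptimalOrdering

end

/-- **Theorem (Girão–Narayanan).** For each `t ≥ 3` there is `C = C(t) > 0` such that every
tournament on `n ≥ C` vertices that is `C·n^{-1/⌈t/2⌉}`-far from being transitive (every
ordering of its vertices has at least `C·n^{2 - 1/⌈t/2⌉}` backward edges) contains a copy
of the unavoidable `t`-tournament `𝒰_t`. -/
theorem statement1 :
    ∀ t : ℕ, 3 ≤ t →
      ∃ C : ℝ, 0 < C ∧
        ∀ (n : ℕ) (T : Fin n → Fin n → Prop), IsTournament T →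
          C ≤ (n : ℝ) →
          (∀ σ : Equiv.Perm (Fin n),
            C * (n : ℝ) ^ ((2 : ℝ) - 1 / (((t + 1) / 2 : ℕ) : ℝ)) ≤ (backCount T σ : ℝ)) →
          ContainsU T t := by
  intro t ht
  obtain ⟨K, hK, hbound⟩ :=
    exists_backCount_le_of_not_containsU (t := t) (by omega : 2 ≤ (t + 1) / 2) (by omega)
  refine ⟨K + 1, by positivity, fun n T hT hn hfar => ?_⟩
  have hn0 : (0 : ℝ) < n := (by positivity : 0 < K + 1).trans_le hn
  by_contra hU
  obtain ⟨σ, hσ⟩ := hbound (Nat.cast_pos.1 hn0) hT hU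
  have hlt : K * (n : ℝ) ^ ((2 : ℝ) - 1 / (((t + 1) / 2 : ℕ) : ℝ)) <
      (K + 1) * (n : ℝ) ^ ((2 : ℝ) - 1 / (((t + 1) / 2 : ℕ) : ℝ)) := by
    gcongr
    exact lt_add_one K
  exact (hlt.trans_le (hfar σ)).not_ge hσ
end

section
/- For each integer t ≥ 3 and all sufficiently large n, there exists a tournament on n vertices that does not contain a copy of the unavoidable t-tournament 𝒰_t and that is δ_t-far from being transitive, where δ_t(n) = 10^{-6}·ex(n, K_{⌈t/2⌉, t})/n²; that is, every linear ordering of its vertex set has at least 10^{-6}·ex(n, K_{⌈t/2⌉, t}) backward edges. -/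
/-- `G` contains a copy of `H` (as a not necessarily induced subgraph). -/
def ContainsCopy {V W : Type*} (G : SimpleGraph V) (H : SimpleGraph W) : Prop :=
  ∃ f : W → V, Function.Injective f ∧ ∀ a b, H.Adj a b → G.Adj (f a) (f b)

/-- The Turán number `ex(n, H)`: the maximum number of edges of an `H`-free
graph on `n` vertices. -/
noncomputable def turanNumber (n : ℕ) {W : Type*} (H : SimpleGraph W) : ℕ :=
  sSup {m | ∃ G : SimpleGraph (Fin n), ¬ ContainsCopy G H ∧ G.edgeSet.ncard = m}

/-!
Take three consecutive intervals `U < V < W` of `⌊n / 3⌋` vertices each in the vertex set and place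
a random copy of an extremal graph on the vertices. Keep only its edges between `U` and `W`, and
reverse exactly these edges in the transitive tournament.

Far from transitive: identify each interval with the cyclic group of order `⌊n / 3⌋`. By the
Latin square property of addition, the triples `(a, a + c, c)` of `U × V × W` pairwise share
at most one vertex, and every kept edge `(a, c)` makes its triple a cyclic triangle. These triangles
are edge-disjoint and each has a backward edge in any ordering, while on average a constant
proportion of the edges is kept.

No `𝒰_t`: the tournament is transitive below and above a cut separating `U` from `W`, so in a
copy of `𝒰_t` one class misses the lower side and another one misses the upper side. Each vertex
of the third class lies on one of the two sides, and is adjacent through kept edges to the whole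
class on the opposite side. By pigeonhole, `⌈t/2⌉` of them have the same opposite class,
which gives a `K_{⌈t/2⌉,t}` among the kept edges.
-/

open Finset Function SimpleGraph

section Extremal

variable {V W : Type*} {G : SimpleGraph V} {H : SimpleGraph W}

theorem containsCopy_iff_isContained : ContainsCopy G H ↔ H ⊑ G :=
  ⟨fun ⟨f, hf, hadj⟩ => ⟨⟨⟨f, hadj _ _⟩, hf⟩⟩,
    fun ⟨f⟩ => ⟨f, f.injective, fun _ _ => f.toHom.map_adj⟩⟩

theorem turanNumber_eq_extremalNumber (n : ℕ) (H : SimpleGraph W) :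
    turanNumber n H = extremalNumber n H := by
  classical
  have le_extremalNumber : extremalNumber n H ∈ upperBounds
      {m | ∃ G : SimpleGraph (Fin n), ¬ ContainsCopy G H ∧ G.edgeSet.ncard = m} := by
    rintro _ ⟨G, hG, rfl⟩
    rw [← coe_edgeFinset, Set.ncard_coe_finset]
    simpa using card_edgeFinset_le_extremalNumber (mt containsCopy_iff_isContained.mpr hG)
  refine (csSup_le' le_extremalNumber).antisymm (Finset.sup_le fun G hG => ?_)
  refine le_csSup ⟨_, le_extremalNumber⟩ ⟨G, mt containsCopy_iff_isContained.mp ?_, ?_⟩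
  · exact (mem_filter.mp hG).2
  · rw [← coe_edgeFinset, Set.ncard_coe_finset]

theorem completeBipartiteGraph_isContained_of_isCompleteBetween {α β : Type*} [Fintype α]
    [Fintype β] {A B : Finset V} (hA : Fintype.card α ≤ #A) (hB : Fintype.card β ≤ #B)
    (hAB : G.IsCompleteBetween A B) : completeBipartiteGraph α β ⊑ G := by
  obtain ⟨A', hA'A, hA'⟩ := exists_subset_card_eq hA
  obtain ⟨B', hB'B, hB'⟩ := exists_subset_card_eq hB
  exact completeBipartiteGraph_isContained_iff.mpr
    ⟨A', B', hA', hB', fun _ ha _ hb => hAB (hA'A ha) (hB'B hb)⟩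

theorem completeBipartiteGraph_isContained_of_forall_adj_or_forall_adj {α β : Type*} [Fintype α]
    [Fintype β] {A B C : Finset V} (hA : Fintype.card β ≤ #A) (hB : Fintype.card β ≤ #B)
    (hC : 2 * Fintype.card α ≤ #C + 1)
    (hadj : ∀ c ∈ C, (∀ a ∈ A, G.Adj c a) ∨ ∀ b ∈ B, G.Adj c b) :
    completeBipartiteGraph α β ⊑ G := by
  classical
  have hcard := card_filter_add_card_filter_not (s := C) fun c => ∀ a ∈ A, G.Adj c a
  obtain hα | hα : Fintype.card α ≤ #{c ∈ C | ∀ a ∈ A, G.Adj c a} ∨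
      Fintype.card α ≤ #{c ∈ C | ¬ ∀ a ∈ A, G.Adj c a} := by
    omega
  · exact completeBipartiteGraph_isContained_of_isCompleteBetween hα hA fun c hc a ha =>
      (mem_filter.mp hc).2 a ha
  · refine completeBipartiteGraph_isContained_of_isCompleteBetween hα hB fun c hc b hb => ?_
    obtain ⟨hcC, hcA⟩ := mem_filter.mp hc
    exact (hadj c hcC).resolve_left hcA b hb

end Extremal

section Averaging

theorem card_mul_card_filter_smul_mem {M X : Type*} [Group M] [Fintype M] [MulAction M X]
    [MulAction.IsPretransitive M X] [Fintype X] [DecidableEq X] (s : Finset X) (x : X) :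
    Fintype.card X * #{g : M | g • x ∈ s} = Fintype.card M * #s := by
  have card_filter_eq (y : X) : #{g : M | g • y ∈ s} = #{g : M | g • x ∈ s} := by
    obtain ⟨h, rfl⟩ := MulAction.exists_smul_eq M x y
    exact card_equiv (Equiv.mulRight h) fun g => by simp [mul_smul]
  have card_smul_mem (g : M) : #{y | g • y ∈ s} = #s :=
    card_equiv (MulAction.toPerm g) fun y => by simp
  calc Fintype.card X * #{g : M | g • x ∈ s} = ∑ y, #{g : M | g • y ∈ s} := by
        simp only [card_filter_eq, sum_const, card_univ, smul_eq_mul]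
    _ = ∑ g : M, #{y | g • y ∈ s} := sum_card_bipartiteAbove_eq_sum_card_bipartiteBelow _
    _ = Fintype.card M * #s := by
        simp only [card_smul_mem, sum_const, card_univ, smul_eq_mul]

variable {V : Type*} [Fintype V] (G : SimpleGraph V) [DecidableRel G.Adj]

theorem card_filter_embedding_adj_eq_twice_card_edges :
    #{e : Fin 2 ↪ V | G.Adj (e 0) (e 1)} = 2 * #G.edgeFinset := by
  rw [← dart_card_eq_twice_card_edges, ← card_univ]
  refine (card_bij (fun d _ => Function.Embedding.embFinTwo d.fst_ne_snd) ?_ ?_ ?_).symm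
  · exact fun d _ => mem_filter.mpr ⟨mem_univ _, d.adj⟩
  · exact fun d _ d' _ h => Dart.ext _ _ <|
      Prod.ext (DFunLike.congr_fun h 0) (DFunLike.congr_fun h 1)
  · refine fun e he => ⟨⟨(e 0, e 1), (mem_filter.mp he).2⟩, mem_univ _, ?_⟩
    ext i
    fin_cases i <;> rfl

theorem card_mul_card_perm_adj [DecidableEq V] {x y : V} (hxy : x ≠ y) :
    Fintype.card V * (Fintype.card V - 1) * #{σ : Equiv.Perm V | G.Adj (σ x) (σ y)} =
      Fintype.card (Equiv.Perm V) * (2 * #G.edgeFinset) := by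
  have := Equiv.Perm.isMultiplyPretransitive V 2
  have h := card_mul_card_filter_smul_mem (M := Equiv.Perm V)
    {e : Fin 2 ↪ V | G.Adj (e 0) (e 1)} (Function.Embedding.embFinTwo hxy)
  simpa [card_filter_embedding_adj_eq_twice_card_edges, Nat.descFactorial, mul_comm,
    Function.Embedding.embFinTwo_apply_zero, Function.Embedding.embFinTwo_apply_one] using h

theorem exists_perm_mul_card_edges_le {ι : Type*} [Fintype ι] (x y : ι → V)
    (hxy : ∀ i, x i ≠ y i) :
    ∃ σ : Equiv.Perm V, Fintype.card ι * (2 * #G.edgeFinset) ≤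
      Fintype.card V * (Fintype.card V - 1) * #{i | G.Adj (σ (x i)) (σ (y i))} := by
  classical
  suffices ∑ _σ : Equiv.Perm V, Fintype.card ι * (2 * #G.edgeFinset) =
      ∑ σ : Equiv.Perm V, Fintype.card V * (Fintype.card V - 1) *
        #{i | G.Adj (σ (x i)) (σ (y i))} by
    simpa using exists_le_of_sum_le univ_nonempty this.le
  symm
  calc ∑ σ : Equiv.Perm V, Fintype.card V * (Fintype.card V - 1) *
          #{i | G.Adj (σ (x i)) (σ (y i))}
      = ∑ i, Fintype.card V * (Fintype.card V - 1) *
          #{σ : Equiv.Perm V | G.Adj (σ (x i)) (σ (y i))} := by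
        rw [← mul_sum, ← mul_sum]
        congr 1
        exact sum_card_bipartiteAbove_eq_sum_card_bipartiteBelow _
    _ = ∑ _i : ι, Fintype.card (Equiv.Perm V) * (2 * #G.edgeFinset) :=
        sum_congr rfl fun i _ => card_mul_card_perm_adj G (hxy i)
    _ = ∑ _σ : Equiv.Perm V, Fintype.card ι * (2 * #G.edgeFinset) := by
        simp only [sum_const, card_univ, smul_eq_mul, mul_left_comm]

end Averaging

section CyclicTriangle

variable {V : Type*} {T : V → V → Prop}

/-- The vertices `x`, `y`, `z` span a cyclic triangle `x → y → z → x` of `T`. -/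
def CyclicTriangle (T : V → V → Prop) (x y z : V) : Prop :=
  T x y ∧ T y z ∧ T z x

/-- The directed edges of the triangle `x → y → z → x`. -/
def triangleEdges (x y z : V) : Set (V × V) :=
  {(x, y), (y, z), (z, x)}

theorem CyclicTriangle.exists_backward_mem_triangleEdges (hT : ∀ x, ¬ T x x) {x y z : V}
    (h : CyclicTriangle T x y z) {n : ℕ} (σ : Fin n ≃ V) :
    ∃ p : Fin n × Fin n, (p.1 < p.2 ∧ T (σ p.2) (σ p.1)) ∧
      (σ p.2, σ p.1) ∈ triangleEdges x y z := by
  obtain ⟨hxy, hyz, hzx⟩ := h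
  by_contra! no_backward
  have forward {a b : V} (hab : T a b) (hmem : (a, b) ∈ triangleEdges x y z) :
      σ.symm a < σ.symm b := by
    refine lt_of_le_of_ne (not_lt.mp fun hlt => ?_) fun heq => ?_
    · exact no_backward (σ.symm b, σ.symm a) ⟨hlt, by simpa using hab⟩ (by simpa using hmem)
    · exact hT b (σ.symm.injective heq ▸ hab)
  exact lt_irrefl _ <| (forward hxy (.inl rfl)).trans <|
    (forward hyz (.inr (.inl rfl))).trans (forward hzx (.inr (.inr rfl)))

theorem card_le_backCount_of_edgeDisjoint_cyclicTriangle (hT : ∀ x, ¬ T x x) {ι : Type*}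
    {n : ℕ} (σ : Fin n ≃ V) {x y z : ι → V} (htri : ∀ i, CyclicTriangle T (x i) (y i) (z i))
    (hdisj : Pairwise (Disjoint on fun i => triangleEdges (x i) (y i) (z i))) :
    Nat.card ι ≤ backCount T σ := by
  choose p hp hpE using fun i => (htri i).exists_backward_mem_triangleEdges hT σ
  have hp_inj : Injective p := fun i j hij => by
    by_contra hne
    exact Set.disjoint_left.mp (hdisj hne) (hpE i) (hij ▸ hpE j)
  rw [← Set.ncard_univ]
  exact Set.ncard_le_ncard_of_injOn p (fun i _ => hp i) hp_inj.injOn (Set.toFinite _)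

theorem pairwise_disjoint_triangleEdges {A : Type*} [AddGroup A] {u v w : A → V}
    (hu : Injective u) (hv : Injective v) (hw : Injective w) (huv : ∀ a b, u a ≠ v b)
    (hvw : ∀ a b, v a ≠ w b) (hwu : ∀ a b, w a ≠ u b) :
    Pairwise (Disjoint on fun p : A × A => triangleEdges (u p.1) (v (p.1 + p.2)) (w p.2)) := by
  rintro ⟨a, c⟩ ⟨a', c'⟩ hne
  refine Set.disjoint_left.mpr fun e he he' => hne ?_
  simp only [triangleEdges, Set.mem_insert_iff, Set.mem_singleton_iff] at he he'
  rcases he with rfl | rfl | rfl <;>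
    simp only [Prod.mk.injEq, huv, hvw, hwu, (huv _ _).symm, (hvw _ _).symm, (hwu _ _).symm,
      hu.eq_iff, hv.eq_iff, hw.eq_iff, and_false, or_false, false_or] at he' ⊢
  · obtain ⟨rfl, h⟩ := he'
    exact ⟨rfl, add_left_cancel h⟩
  · obtain ⟨h, rfl⟩ := he'
    exact ⟨add_right_cancel h, rfl⟩
  · exact he'.symm

end CyclicTriangle

section Unavoidable

variable {V : Type*} {T : V → V → Prop} {t : ℕ}

theorem exists_forall_notMem_of_forall_not_cyclicTriangle {f : Fin 3 × Fin t → V}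
    (hf : ∀ i a b, T (f (i, a)) (f (i + 1, b))) {s : Set V}
    (hs : ∀ x ∈ s, ∀ y ∈ s, ∀ z ∈ s, ¬ CyclicTriangle T x y z) :
    ∃ i, ∀ a, f (i, a) ∉ s := by
  by_contra! h
  choose a ha using h
  exact hs _ (ha 0) _ (ha 1) _ (ha 2) ⟨hf 0 _ _, hf 1 _ _, hf 2 _ _⟩

theorem completeBipartiteGraph_isContained_of_containsU {s : Set V}
    (hs : ∀ x ∈ s, ∀ y ∈ s, ∀ z ∈ s, ¬ CyclicTriangle T x y z)
    (hsc : ∀ x ∈ sᶜ, ∀ y ∈ sᶜ, ∀ z ∈ sᶜ, ¬ CyclicTriangle T x y z)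
    {G : SimpleGraph V} (hG : ∀ x ∉ s, ∀ y ∈ s, T x y → G.Adj x y)
    {r : ℕ} (hr : 2 * r ≤ t + 1) (hT : ContainsU T t) :
    completeBipartiteGraph (Fin r) (Fin t) ⊑ G := by
  classical
  obtain ⟨f, hf_inj, hf⟩ := hT
  have hcyc (i a b) : T (f (i, a)) (f (i + 1, b)) := hf _ _ (Or.inr rfl)
  obtain ⟨i, hi⟩ := exists_forall_notMem_of_forall_not_cyclicTriangle hcyc hs
  obtain ⟨j, hj⟩ := exists_forall_notMem_of_forall_not_cyclicTriangle hcyc hsc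
  simp only [Set.notMem_compl_iff] at hj
  let vertexClass (k : Fin 3) : Finset V := univ.image fun a => f (k, a)
  have card_vertexClass (k) : #(vertexClass k) = t := by
    rw [card_image_of_injective _ fun a b h => by simpa using hf_inj h, card_univ, Fintype.card_fin]
  have contained (k l m : Fin 3) (hadj : ∀ a, (∀ b, G.Adj (f (k, a)) (f (l, b))) ∨
      ∀ b, G.Adj (f (k, a)) (f (m, b))) : completeBipartiteGraph (Fin r) (Fin t) ⊑ G :=
    completeBipartiteGraph_isContained_of_forall_adj_or_forall_adj (A := vertexClass l)
      (B := vertexClass m) (C := vertexClass k) (by simp [card_vertexClass])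
      (by simp [card_vertexClass]) (by simpa [card_vertexClass] using hr)
      (by simpa [vertexClass] using hadj)
  obtain rfl | rfl | rfl : j = i ∨ j = i + 1 ∨ j = i + 1 + 1 := by
    clear hi hj
    decide +revert
  · exact contained j j j fun a => absurd (hj a) (hi a)
  · exact contained i (i + 1) (i + 1) fun a => .inl fun b => hG _ (hi a) _ (hj b) (hcyc i a b)
  · refine contained (i + 1) i (i + 1 + 1) fun c => ?_
    by_cases hc : f (i + 1, c) ∈ s
    · exact .inl fun a => (hG _ (hi a) _ hc (hcyc i a c)).symm
    · exact .inr fun b => hG _ hc _ (hj b) (hcyc (i + 1) c b)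

end Unavoidable

section BackedgeTournament

variable {V : Type*} [LinearOrder V] {G : SimpleGraph V}

/-- The tournament on an ordered vertex set whose backward edges are the edges of `G`. -/
def backedgeTournament (G : SimpleGraph V) (x y : V) : Prop :=
  (x < y ∧ ¬ G.Adj x y) ∨ (y < x ∧ G.Adj x y)

theorem isTournament_backedgeTournament (G : SimpleGraph V) :
    IsTournament (backedgeTournament G) := by
  refine ⟨fun x => by simp [backedgeTournament], fun x y hxy => ?_⟩
  rcases hxy.lt_or_gt with h | h <;> simp [backedgeTournament, h, h.not_gt, G.adj_comm]

theorem not_cyclicTriangle_backedgeTournament {s : Set V} (hs : G.IsIndepSet s) {x y z : V}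
    (hx : x ∈ s) (hy : y ∈ s) (hz : z ∈ s) : ¬ CyclicTriangle (backedgeTournament G) x y z := by
  have lt_of_edge {u v : V} (hu : u ∈ s) (hv : v ∈ s) (h : backedgeTournament G u v) : u < v :=
    h.elim And.left fun h => absurd h.2 (hs hu hv h.1.ne')
  rintro ⟨hxy, hyz, hzx⟩
  exact lt_irrefl x ((lt_of_edge hx hy hxy).trans <|
    (lt_of_edge hy hz hyz).trans (lt_of_edge hz hx hzx))

theorem not_containsU_backedgeTournament {s : Set V} (hs : IsLowerSet s)
    (hG : G.IsBipartiteWith s sᶜ) {r t : ℕ} (hr : 2 * r ≤ t + 1)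
    (hfree : (completeBipartiteGraph (Fin r) (Fin t)).Free G) :
    ¬ ContainsU (backedgeTournament G) t := by
  have indep_s : G.IsIndepSet s := fun x hx y hy _ hxy => hG.mem_of_mem_adj hx hxy hy
  have indep_sc : G.IsIndepSet sᶜ := fun x hx y hy _ hxy => hx (hG.mem_of_mem_adj' hy hxy)
  refine mt (completeBipartiteGraph_isContained_of_containsU (s := s) ?_ ?_ ?_ hr) hfree
  · exact fun x hx y hy z hz => not_cyclicTriangle_backedgeTournament indep_s hx hy hz
  · exact fun x hx y hy z hz => not_cyclicTriangle_backedgeTournament indep_sc hx hy hz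
  · rintro x hx y hy (hxy | hxy)
    · exact absurd (hs hxy.1.le hy) hx
    · exact hxy.2

theorem isBipartiteWith_lowerClosure {X Y : Set V} (hXY : ∀ x ∈ X, ∀ y ∈ Y, x < y)
    (hG : G.IsBipartiteWith X Y) :
    G.IsBipartiteWith (lowerClosure X) (lowerClosure X : Set V)ᶜ := by
  have hX : X ⊆ lowerClosure X := subset_lowerClosure
  have hY : Y ⊆ (lowerClosure X : Set V)ᶜ := by
    rintro y hy ⟨x, hx, hyx⟩
    exact (hXY x hx y hy).not_ge hyx
  exact ⟨disjoint_compl_right, fun v w h =>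
    (hG.mem_of_adj h).imp (And.imp (@hX _) (@hY _)) (And.imp (@hY _) (@hX _))⟩

theorem card_adj_le_backCount_backedgeTournament {A : Type*} [AddGroup A] {u v w : A → V}
    (hu : Injective u) (hv : Injective v) (hw : Injective w)
    (huv : ∀ a b, u a < v b) (hvw : ∀ a b, v a < w b)
    (huv_adj : ∀ a b, ¬ G.Adj (u a) (v b)) (hvw_adj : ∀ a b, ¬ G.Adj (v a) (w b))
    {n : ℕ} (σ : Fin n ≃ V) :
    Nat.card {p : A × A // G.Adj (u p.1) (w p.2)} ≤ backCount (backedgeTournament G) σ := by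
  refine card_le_backCount_of_edgeDisjoint_cyclicTriangle
    (isTournament_backedgeTournament G).1 σ
    (x := fun p => u p.1.1) (y := fun p => v (p.1.1 + p.1.2)) (z := fun p => w p.1.2) ?_ ?_
  · rintro ⟨⟨a, c⟩, hac⟩
    exact ⟨.inl ⟨huv _ _, huv_adj _ _⟩, .inl ⟨hvw _ _, hvw_adj _ _⟩,
      .inr ⟨(huv a a).trans (hvw a c), hac.symm⟩⟩
  · exact (pairwise_disjoint_triangleEdges hu hv hw (fun a b => (huv a b).ne)
      (fun a b => (hvw a b).ne) fun a b => ((huv b b).trans (hvw b a)).ne').comp_of_injective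
      Subtype.val_injective

end BackedgeTournament

section Construction

theorem exists_isTournament_not_containsU_of_free {V A : Type*} [Fintype V] [LinearOrder V]
    [Fintype A] [AddGroup A] {u v w : A → V} (hu : Injective u) (hv : Injective v)
    (hw : Injective w) (huv : ∀ a b, u a < v b) (hvw : ∀ a b, v a < w b)
    {G : SimpleGraph V} [DecidableRel G.Adj] {r t : ℕ} (hr : 2 * r ≤ t + 1)
    (hG : (completeBipartiteGraph (Fin r) (Fin t)).Free G) :
    ∃ T : V → V → Prop, IsTournament T ∧ ¬ ContainsU T t ∧ ∀ {n : ℕ} (σ : Fin n ≃ V),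
      Fintype.card A ^ 2 * (2 * #G.edgeFinset) ≤
        Fintype.card V * (Fintype.card V - 1) * backCount T σ := by
  have huw (a b : A) : u a < w b := (huv a a).trans (hvw a b)
  obtain ⟨ρ, hρ⟩ := exists_perm_mul_card_edges_le G (fun p : A × A => u p.1) (fun p => w p.2)
    fun p => (huw p.1 p.2).ne
  let B := (G.comap ρ).between (Set.range u) (Set.range w)
  have range_lt : ∀ x ∈ Set.range u, ∀ y ∈ Set.range w, x < y := by
    rintro _ ⟨a, rfl⟩ _ ⟨b, rfl⟩
    exact huw a b
  have bipartite : B.IsBipartiteWith (Set.range u) (Set.range w) :=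
    between_isBipartiteWith <| Set.disjoint_left.mpr fun x hxu hxw =>
      (range_lt x hxu x hxw).false
  have free : (completeBipartiteGraph (Fin r) (Fin t)).Free B := fun h =>
    hG <| h.trans <| (IsContained.of_le between_le).trans ⟨(Iso.comap ρ G).toCopy⟩
  have adj_iff (a b : A) : B.Adj (u a) (w b) ↔ G.Adj (ρ (u a)) (ρ (w b)) := by
    simp [B, between_adj]
  have not_adj_v {x : V} (b : A) : ¬ B.Adj x (v b) := by
    intro h
    obtain ⟨-, a, ha⟩ | ⟨-, a, ha⟩ := bipartite.mem_of_adj h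
    · exact (hvw b a).ne' ha
    · exact (huv a b).ne ha
  refine ⟨backedgeTournament B, isTournament_backedgeTournament B,
    not_containsU_backedgeTournament (lowerClosure (Set.range u)).lower
      (isBipartiteWith_lowerClosure range_lt bipartite) hr free, fun σ => ?_⟩
  have h := card_adj_le_backCount_backedgeTournament (G := B) hu hv hw huv hvw
    (fun _ b => not_adj_v b) (fun b _ h => not_adj_v b h.symm) σ
  simp only [adj_iff, Nat.card_eq_fintype_card, Fintype.card_subtype] at h
  rw [Fintype.card_prod, ← sq] at hρ
  exact hρ.trans (Nat.mul_le_mul_left _ h)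

theorem exists_three_consecutive_blocks (n : ℕ) :
    ∃ u v w : Fin (n / 3) → Fin n, Injective u ∧ Injective v ∧ Injective w ∧
      (∀ a b, u a < v b) ∧ ∀ a b, v a < w b := by
  refine ⟨fun a => ⟨a, by omega⟩, fun a => ⟨n / 3 + a, by omega⟩,
    fun a => ⟨2 * (n / 3) + a, by omega⟩, ?_, ?_, ?_, ?_, ?_⟩
  · exact fun a b h => by simpa [Fin.ext_iff] using h
  · exact fun a b h => by simpa [Fin.ext_iff] using h
  · exact fun a b h => by simpa [Fin.ext_iff] using h
  · exact fun a b => Fin.mk_lt_mk.mpr (by omega)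
  · exact fun a b => Fin.mk_lt_mk.mpr (by omega)

theorem mul_pred_le_twenty_mul_div_three_sq {n : ℕ} (hn : 3 ≤ n) :
    n * (n - 1) ≤ 20 * (n / 3) ^ 2 := by
  have h_pos : 1 ≤ n / 3 := by omega
  calc n * (n - 1) ≤ (3 * (n / 3) + 2) * (3 * (n / 3) + 1) :=
        Nat.mul_le_mul (by omega) (by omega)
    _ ≤ 20 * (n / 3) ^ 2 := by nlinarith

end Construction

theorem statement3_general {t n : ℕ} (ht : 1 ≤ t) (hn : 3 ≤ n) :
    ∃ T : Fin n → Fin n → Prop, IsTournament T ∧ ¬ ContainsU T t ∧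
      ∀ σ : Equiv.Perm (Fin n),
        turanNumber n (completeBipartiteGraph (Fin ((t + 1) / 2)) (Fin t)) ≤
          10 * backCount T σ := by
  classical
  have : NeZero (n / 3) := ⟨by omega⟩
  have : NeZero ((t + 1) / 2) := ⟨by omega⟩
  have : NeZero t := ⟨by omega⟩
  have ne_bot : completeBipartiteGraph (Fin ((t + 1) / 2)) (Fin t) ≠ ⊥ :=
    ne_bot_iff_exists_adj.mpr ⟨.inl 0, .inr 0, by simp⟩
  obtain ⟨G, _, hG⟩ := exists_isExtremal_free (V := Fin n) ne_bot
  obtain ⟨u, v, w, hu, hv, hw, huv, hvw⟩ := exists_three_consecutive_blocks n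
  obtain ⟨T, hT, hTU, hback⟩ := exists_isTournament_not_containsU_of_free hu hv hw huv hvw
    (by omega : 2 * ((t + 1) / 2) ≤ t + 1) hG.prop
  refine ⟨T, hT, hTU, fun σ => ?_⟩
  have card_edges : #G.edgeFinset =
      turanNumber n (completeBipartiteGraph (Fin ((t + 1) / 2)) (Fin t)) := by
    rw [turanNumber_eq_extremalNumber, card_edgeFinset_of_isExtremal_free hG, Fintype.card_fin]
  have h : (n / 3) ^ 2 * (2 * #G.edgeFinset) ≤ (n / 3) ^ 2 * (2 * (10 * backCount T σ)) := by
    calc (n / 3) ^ 2 * (2 * #G.edgeFinset) ≤ n * (n - 1) * backCount T σ := by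
          simpa only [Fintype.card_fin] using hback σ
      _ ≤ 20 * (n / 3) ^ 2 * backCount T σ :=
          Nat.mul_le_mul_right _ (mul_pred_le_twenty_mul_div_three_sq hn)
      _ = (n / 3) ^ 2 * (2 * (10 * backCount T σ)) := by ring
  have h_pos : 0 < n / 3 := NeZero.pos _
  have := Nat.le_of_mul_le_mul_left h (by positivity)
  omega

/-- **Proposition (extremal construction for tournaments).** For each `t ≥ 3` and all large
enough `n`, there is a tournament on `n` vertices with no copy of `𝒰_t` in which every
ordering of the vertex set has at least `ex(n, K_{⌈t/2⌉,t}) / 10^6` backward edges. -/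
theorem statement3 :
    ∀ t : ℕ, 3 ≤ t →
      ∃ N : ℕ, ∀ n : ℕ, N ≤ n →
        ∃ T : Fin n → Fin n → Prop, IsTournament T ∧ ¬ ContainsU T t ∧
          ∀ σ : Equiv.Perm (Fin n),
            (turanNumber n (completeBipartiteGraph (Fin ((t + 1) / 2)) (Fin t)) : ℝ) / 10 ^ 6 ≤
              (backCount T σ : ℝ) := by
  refine fun t ht => ⟨3, fun n hn => ?_⟩
  obtain ⟨T, hT, hTU, hback⟩ := statement3_general (Nat.one_le_of_lt ht) hn
  refine ⟨T, hT, hTU, fun σ => ?_⟩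
  have hσ : (turanNumber n (completeBipartiteGraph (Fin ((t + 1) / 2)) (Fin t)) : ℝ) ≤
      10 * backCount T σ := mod_cast hback σ
  linarith
end

section
/- Let t ≥ 3 be an integer and set r = ⌈t/2⌉. For all sufficiently large n the following holds. Let H be a bipartite graph on n vertices with vertex classes A and B that contains no copy of K_{r,t} and has at least (ex(n, K_{r,t}) − 1)/2 edges, and let T be the tournament on A ∪ B in which T[A] and T[B] are transitive (following fixed linear orders on A and on B), each edge ab of H with a ∈ A, b ∈ B is directed from b to a in T, and every other edge between A and B is directed from A to B. Then every linear ordering of the vertex set of T has at least e(H)/10⁵ backward edges. -/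
/-- The tournament on `A ∪ B` built from a bipartite graph `H` between `A = Fin a` and
`B = Fin b`: within `A` and within `B` edges follow the linear orders (so both classes are
transitive); an edge of `H` between `x ∈ A` and `y ∈ B` is directed from `y` to `x`, and
every other edge between the classes is directed from `A` to `B`. -/
def bipTournament (a b : ℕ) (H : Fin a → Fin b → Prop) (x y : Fin a ⊕ Fin b) : Prop :=
  match x, y with
  | Sum.inl u, Sum.inl v => u < v
  | Sum.inr u, Sum.inr v => u < v
  | Sum.inl u, Sum.inr v => ¬ H u v
  | Sum.inr v, Sum.inl u => H u v

/-- The bipartite graph `H` between `Fin a` and `Fin b` contains no copy of `K_{r,t}`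
(in either orientation). -/
def NoKrt {a b : ℕ} (H : Fin a → Fin b → Prop) (r t : ℕ) : Prop :=
  (¬ ∃ (A : Finset (Fin a)) (B : Finset (Fin b)),
      A.card = r ∧ B.card = t ∧ ∀ x ∈ A, ∀ y ∈ B, H x y) ∧
  (¬ ∃ (A : Finset (Fin a)) (B : Finset (Fin b)),
      A.card = t ∧ B.card = r ∧ ∀ x ∈ A, ∀ y ∈ B, H x y)

/-!
In an ordering `σ` of the vertices, an edge of `H` is backward unless it lies in the region
`{(x, y) | y precedes x}`, and the backward pairs inside that region are exactly the non-edges of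
`H`. Hence `e(H)` exceeds the number of backward edges by at most the number of edges minus the
number of non-edges in the region. This difference is `O(n)`: cut off the last `2r` vertices of `A`.
The vertices of `B` preceding all of them span a full rectangle, in which only boundedly many
columns are more than half full as there is no `K_{r,t}`; the other vertices of `B` precede no
further vertex of `A`, so each of them costs `2r` once and for all. Iterating over `A` gives the
linear bound. On the other hand `ex(n, K_{r,t})` is superlinear, because the point-line incidence
graph of an affine plane has no two vertices with two common neighbours; so the linear error is
negligible against `e(H)`.
-/

section Bicliques

open Finset

variable {α β ι : Type*} {R : α → β → Prop} {s t : ℕ}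

/-- The relation `R`, viewed as a bipartite graph between `α` and `β`, contains the complete
bipartite graph with `s` vertices in `α` and `t` vertices in `β`. -/
def HasBiclique (R : α → β → Prop) (s t : ℕ) : Prop :=
  ∃ (A : Finset α) (B : Finset β), #A = s ∧ #B = t ∧ ∀ x ∈ A, ∀ y ∈ B, R x y

/-- The weight `1` of an edge and `-1` of a non-edge, so that summing it over a set of pairs
measures how far that set is from being half full. -/
def edgeSign (R : α → β → Prop) [DecidableRel R] (x : α) (y : β) : ℤ :=
  if R x y then 1 else -1

variable [DecidableRel R]

lemma edgeSign_le_one (x : α) (y : β) : edgeSign R x y ≤ 1 := by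
  unfold edgeSign
  split_ifs <;> decide

lemma sum_edgeSign_le_card_mul_card (A : Finset α) (B : α → Finset β) {m : ℕ}
    (hB : ∀ x ∈ A, #(B x) ≤ m) : ∑ x ∈ A, ∑ y ∈ B x, edgeSign R x y ≤ #A * m := by
  rw [← nsmul_eq_mul]
  refine sum_le_card_nsmul _ _ _ fun x hx => ?_
  calc ∑ y ∈ B x, edgeSign R x y ≤ #(B x) • 1 := sum_le_card_nsmul _ _ _ fun y _ =>
        edgeSign_le_one x y
    _ ≤ m := by simpa using hB x hx

lemma sum_edgeSign_eq (A : Finset α) (y : β) :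
    ∑ x ∈ A, edgeSign R x y = 2 * #{x ∈ A | R x y} - #A := by
  have hcard := card_filter_add_card_filter_not (s := A) (fun x => R x y)
  simp only [edgeSign, sum_ite, sum_const, nsmul_eq_mul, mul_one, mul_neg]
  lia

lemma card_filter_le_choose_mul_of_not_hasBiclique (hR : ¬ HasBiclique R s t) (A : Finset α)
    (B : Finset β) : #{y ∈ B | s ≤ #{x ∈ A | R x y}} ≤ (#A).choose s * t := by
  classical
  have hcover : {y ∈ B | s ≤ #{x ∈ A | R x y}} ⊆
      (A.powersetCard s).biUnion fun S => {y ∈ B | ∀ x ∈ S, R x y} := by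
    intro y hy
    obtain ⟨hyB, hys⟩ := mem_filter.1 hy
    obtain ⟨S, hS, hScard⟩ := exists_subset_card_eq hys
    refine mem_biUnion.2 ⟨S, mem_powersetCard.2 ⟨hS.trans (filter_subset _ _), hScard⟩, ?_⟩
    exact mem_filter.2 ⟨hyB, fun x hx => (mem_filter.1 (hS hx)).2⟩
  have hcommon : ∀ S ∈ A.powersetCard s, #{y ∈ B | ∀ x ∈ S, R x y} ≤ t := by
    intro S hS
    by_contra! hlt
    obtain ⟨T, hT, hTcard⟩ := exists_subset_card_eq hlt.le
    exact hR ⟨S, T, (mem_powersetCard.1 hS).2, hTcard,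
      fun x hx y hy => (mem_filter.1 (hT hy)).2 x hx⟩
  simpa only [card_powersetCard] using
    (card_le_card hcover).trans (card_biUnion_le_card_mul _ _ _ hcommon)

lemma sum_edgeSign_le_of_not_hasBiclique (hR : ¬ HasBiclique R s t) {A : Finset α}
    (hA : 2 * s ≤ #A) (B : Finset β) :
    ∑ x ∈ A, ∑ y ∈ B, edgeSign R x y ≤ #A * ((#A).choose s * t) := by
  have hcolumn : ∀ y, ∑ x ∈ A, edgeSign R x y ≤ if s ≤ #{x ∈ A | R x y} then (#A : ℤ) else 0 := by
    intro y
    have hle := card_filter_le A fun x => R x y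
    rw [sum_edgeSign_eq]
    split_ifs <;> lia
  calc ∑ x ∈ A, ∑ y ∈ B, edgeSign R x y
      ≤ ∑ y ∈ B, if s ≤ #{x ∈ A | R x y} then (#A : ℤ) else 0 := by
        rw [sum_comm]
        exact sum_le_sum fun y _ => hcolumn y
    _ = #A * #{y ∈ B | s ≤ #{x ∈ A | R x y}} := by
        rw [← sum_filter, sum_const, nsmul_eq_mul, mul_comm]
    _ ≤ #A * ((#A).choose s * t) := by
        gcongr
        exact_mod_cast card_filter_le_choose_mul_of_not_hasBiclique hR A B

variable [LinearOrder ι]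

lemma exists_subset_card_eq_forall_le (f : α → ι) {A : Finset α} {k : ℕ} (hk : k ≤ #A) :
    ∃ S ⊆ A, #S = k ∧ ∀ x ∈ S, ∀ z ∈ A, z ∉ S → f z ≤ f x := by
  classical
  induction k with
  | zero => exact ⟨∅, empty_subset _, card_empty, by simp⟩
  | succ k ih =>
    obtain ⟨S, hSA, hS, htop⟩ := ih (k.le_succ.trans hk)
    have hne : (A \ S).Nonempty := sdiff_nonempty_of_card_lt_card (by lia)
    obtain ⟨m, hm, hmax⟩ := exists_max_image (A \ S) f hne
    obtain ⟨hmA, hmS⟩ := mem_sdiff.1 hm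
    refine ⟨insert m S, insert_subset hmA hSA, by rw [card_insert_of_notMem hmS, hS], ?_⟩
    intro x hx z hzA hz
    have hzS : z ∉ S := fun h => hz (mem_insert_of_mem h)
    rcases mem_insert.1 hx with rfl | hxS
    · exact hmax z (mem_sdiff.2 ⟨hzA, hzS⟩)
    · exact htop x hxS z hzA hzS

/-- An element of `B` that is not below all of the top part `S` of `A` is below nothing in
`A \ S`, hence the missing fourth term. -/
lemma sum_filter_lt_eq_of_top {M : Type*} [AddCommMonoid M] [DecidableEq α] (w : α → β → M)
    (f : α → ι) (g : β → ι) {S A : Finset α} (B : Finset β) (hSA : S ⊆ A)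
    (htop : ∀ x ∈ S, ∀ z ∈ A, z ∉ S → f z ≤ f x) :
    ∑ x ∈ A, ∑ y ∈ B with g y < f x, w x y =
      ∑ x ∈ A \ S, ∑ y ∈ {y ∈ B | ∀ z ∈ S, g y < f z} with g y < f x, w x y +
        (∑ x ∈ S, ∑ y ∈ B with ∀ z ∈ S, g y < f z, w x y +
          ∑ x ∈ S, ∑ y ∈ {y ∈ B | ¬ ∀ z ∈ S, g y < f z} with g y < f x, w x y) := by
  rw [← sum_sdiff hSA, ← sum_add_distrib]
  congr 1 <;> refine sum_congr rfl fun x hx => ?_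
  · obtain ⟨hxA, hxS⟩ := mem_sdiff.1 hx
    have hbelow : ∀ y, g y < f x → ∀ z ∈ S, g y < f z := fun y hy z hz =>
      hy.trans_le (htop z hz x hxA hxS)
    rw [filter_filter]
    exact sum_congr (filter_congr fun y _ => (and_iff_right_of_imp (hbelow y)).symm) fun _ _ => rfl
  · have hall : {y ∈ {y ∈ B | ∀ z ∈ S, g y < f z} | g y < f x} = {y ∈ B | ∀ z ∈ S, g y < f z} :=
      filter_true_of_mem fun y hy => (mem_filter.1 hy).2 x hx
    rw [← sum_filter_add_sum_filter_not {y ∈ B | g y < f x} (fun y => ∀ z ∈ S, g y < f z),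
      filter_comm, hall, filter_comm (fun y => g y < f x)]

lemma sum_edgeSign_filter_lt_le (hs : 0 < s) (hR : ¬ HasBiclique R s t) (f : α → ι) (g : β → ι)
    (A : Finset α) (B : Finset β) :
    ∑ x ∈ A, ∑ y ∈ B with g y < f x, edgeSign R x y ≤
      s.centralBinom * t * #A + 2 * s * #B := by
  classical
  induction A using Finset.strongInduction generalizing B with
  | H A ih =>
  rcases lt_or_ge #A (2 * s) with hA | hA
  · calc ∑ x ∈ A, ∑ y ∈ B with g y < f x, edgeSign R x y
        ≤ #A * #B := sum_edgeSign_le_card_mul_card A _ fun x _ => card_filter_le _ _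
      _ ≤ (2 * s : ℕ) * #B := by gcongr
      _ ≤ s.centralBinom * t * #A + 2 * s * #B := by push_cast; lia
  · obtain ⟨S, hSA, hS, htop⟩ := exists_subset_card_eq_forall_le f hA
    have hSne : S.Nonempty := card_pos.1 (by lia)
    let low := {y ∈ B | ∀ z ∈ S, g y < f z}
    let high := {y ∈ B | ¬ ∀ z ∈ S, g y < f z}
    have hrest := ih (A \ S) (sdiff_ssubset hSA hSne) low
    have hlow : ∑ x ∈ S, ∑ y ∈ low, edgeSign R x y ≤ #S * (s.centralBinom * t) := by
      have := sum_edgeSign_le_of_not_hasBiclique hR hS.ge low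
      rwa [hS, ← Nat.centralBinom_eq_two_mul_choose, ← hS] at this
    have hhigh : ∑ x ∈ S, ∑ y ∈ high with g y < f x, edgeSign R x y ≤ #S * #high :=
      sum_edgeSign_le_card_mul_card S _ fun x _ => card_filter_le _ _
    have hAcard : #(A \ S) + #S = #A := card_sdiff_add_card_eq_card hSA
    have hBcard : #low + #high = #B := card_filter_add_card_filter_not _
    calc ∑ x ∈ A, ∑ y ∈ B with g y < f x, edgeSign R x y
        ≤ (s.centralBinom * t * #(A \ S) + 2 * s * #low) +
            (#S * (s.centralBinom * t) + #S * #high) := by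
          rw [sum_filter_lt_eq_of_top _ f g B hSA htop]
          exact add_le_add hrest (add_le_add hlow hhigh)
      _ = s.centralBinom * t * #A + 2 * s * #B := by
          rw [← hAcard, ← hBcard, hS]
          push_cast
          ring

/-- The pairs counted on the right are the backward edges between the two classes when `f` and `g`
give the positions of the vertices. -/
lemma card_edges_eq_card_backward_add_sum_edgeSign (f : α → ι) (g : β → ι)
    (A : Finset α) (B : Finset β) :
    (#{p ∈ A ×ˢ B | R p.1 p.2} : ℤ) = #{p ∈ A ×ˢ B | R p.1 p.2 ↔ ¬ g p.2 < f p.1} +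
      ∑ x ∈ A, ∑ y ∈ B with g y < f x, edgeSign R x y := by
  simp only [natCast_card_filter, sum_product, sum_filter, ← sum_add_distrib]
  refine sum_congr rfl fun x _ => sum_congr rfl fun y _ => ?_
  by_cases hR : R x y <;> by_cases hgf : g y < f x <;> simp [edgeSign, hR, hgf]

end Bicliques

section BackwardEdges

variable {V : Type*} {a b n s t : ℕ} {H : Fin a → Fin b → Prop}

lemma backCount_eq_ncard (T : V → V → Prop) (σ : Fin n ≃ V) :
    backCount T σ = {p : V × V | σ.symm p.1 < σ.symm p.2 ∧ T p.2 p.1}.ncard := by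
  refine Set.ncard_congr (fun p _ => (σ p.1, σ p.2)) ?_ ?_ ?_
  · simp
  · simp +contextual [Prod.ext_iff]
  · rintro ⟨x, y⟩ hxy
    exact ⟨(σ.symm x, σ.symm y), by simpa using hxy, by simp⟩

lemma ncard_backward_cross_le_backCount (σ : Fin n ≃ (Fin a ⊕ Fin b)) :
    {p : Fin a × Fin b | H p.1 p.2 ↔ ¬ σ.symm (.inr p.2) < σ.symm (.inl p.1)}.ncard ≤
      backCount (bipTournament a b H) σ := by
  classical
  rw [backCount_eq_ncard]
  refine Set.ncard_le_ncard_of_injOn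
    (fun p => if H p.1 p.2 then (.inl p.1, .inr p.2) else (.inr p.2, .inl p.1)) ?_ ?_
    (Set.toFinite _)
  · rintro ⟨u, v⟩ hp
    have hne : σ.symm (.inl u) ≠ σ.symm (.inr v) := by simp
    by_cases h : H u v
    · have hle : σ.symm (.inl u) ≤ σ.symm (.inr v) := by simpa [h] using hp
      simpa [h, bipTournament] using hle.lt_of_ne hne
    · simpa [h, bipTournament] using hp
  · rintro ⟨u, v⟩ - ⟨u', v'⟩ - h
    by_cases h₁ : H u v <;> by_cases h₂ : H u' v' <;> simp_all

lemma ncard_edges_le_backCount_add (hs : 0 < s) (hH : ¬ HasBiclique H s t)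
    (σ : Fin n ≃ (Fin a ⊕ Fin b)) :
    {p : Fin a × Fin b | H p.1 p.2}.ncard ≤
      backCount (bipTournament a b H) σ + (s.centralBinom * t * a + 2 * s * b) := by
  classical
  have hcross := ncard_backward_cross_le_backCount (H := H) σ
  have hsplit := card_edges_eq_card_backward_add_sum_edgeSign (R := H)
    (fun x => σ.symm (.inl x)) (fun y => σ.symm (.inr y)) .univ .univ
  have hsum := sum_edgeSign_filter_lt_le hs hH
    (fun x => σ.symm (.inl x)) (fun y => σ.symm (.inr y)) .univ .univ
  simp only [Finset.univ_product_univ, Finset.card_univ, Fintype.card_fin] at hsplit hsum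
  simp only [Set.ncard_eq_toFinset_card', Set.toFinset_ofPred] at hcross ⊢
  zify at hcross ⊢
  linarith

end BackwardEdges

section TuranNumber

open Finset Filter Asymptotics

variable {V W α β F : Type*} {n : ℕ}

lemma ncard_edgeSet_le_turanNumber {H : SimpleGraph W} {G : SimpleGraph (Fin n)}
    (hG : ¬ ContainsCopy G H) : G.edgeSet.ncard ≤ turanNumber n H := by
  refine le_csSup ⟨(Set.univ : Set (Sym2 (Fin n))).ncard, ?_⟩ ⟨G, hG, rfl⟩
  rintro m ⟨G', -, rfl⟩
  exact Set.ncard_le_ncard (Set.subset_univ _)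

lemma not_containsCopy_completeBipartiteGraph [Nontrivial α] [Nontrivial β] {G : SimpleGraph V}
    (hG : Pairwise fun u v => (G.commonNeighbors u v).Subsingleton) :
    ¬ ContainsCopy G (completeBipartiteGraph α β) := by
  rintro ⟨f, hf, hadj⟩
  obtain ⟨i, i', hi⟩ := exists_pair_ne α
  obtain ⟨j, j', hj⟩ := exists_pair_ne β
  have hcommon : ∀ k, f (.inr k) ∈ G.commonNeighbors (f (.inl i)) (f (.inl i')) := fun k =>
    ⟨hadj _ _ (by simp), hadj _ _ (by simp)⟩
  have heq := hG (hf.ne (Sum.inl_injective.ne hi)) (hcommon j) (hcommon j')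
  exact hj (Sum.inr_injective (hf heq))

lemma subsingleton_commonNeighbors_map {G : SimpleGraph V}
    (hG : Pairwise fun u v => (G.commonNeighbors u v).Subsingleton) (e : V ↪ W) :
    Pairwise fun u v => ((G.map e).commonNeighbors u v).Subsingleton := by
  intro _ _ huv _ hx _ hy
  obtain ⟨u, x, hux, rfl, rfl⟩ := (G.map_adj e _ _).1 hx.1
  obtain ⟨v, x', hvx, rfl, hx'⟩ := (G.map_adj e _ _).1 hx.2
  obtain ⟨u', y, huy, hu', rfl⟩ := (G.map_adj e _ _).1 hy.1
  obtain ⟨v', y', hvy, hv', hy'⟩ := (G.map_adj e _ _).1 hy.2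
  obtain rfl := e.injective hx'
  obtain rfl := e.injective hy'
  obtain rfl := e.injective hu'
  obtain rfl := e.injective hv'
  exact congrArg e (hG (ne_of_apply_ne e huv) ⟨hux, hvx⟩ ⟨huy, hvy⟩)

lemma ncard_edgeSet_le_turanNumber_completeBipartiteGraph [Nontrivial α] [Nontrivial β] [Fintype V]
    {G : SimpleGraph V} (hG : Pairwise fun u v => (G.commonNeighbors u v).Subsingleton)
    (hV : Fintype.card V ≤ n) :
    G.edgeSet.ncard ≤ turanNumber n (completeBipartiteGraph α β) := by
  obtain ⟨e⟩ : Nonempty (V ↪ Fin n) :=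
    Function.Embedding.nonempty_of_card_le (by rwa [Fintype.card_fin])
  calc G.edgeSet.ncard = (G.map e).edgeSet.ncard := by
        rw [SimpleGraph.edgeSet_map, Set.ncard_image_of_injective _ e.sym2Map.injective]
    _ ≤ turanNumber n (completeBipartiteGraph α β) := ncard_edgeSet_le_turanNumber
        (not_containsCopy_completeBipartiteGraph (subsingleton_commonNeighbors_map hG e))

/-- The incidence graph between the points `(x, y)` (on the left) and the non-vertical lines
`y = m * x + c`, encoded as `(m, c)` (on the right), of the affine plane over `F`. -/
def pointLineGraph (F : Type*) [Field F] : SimpleGraph ((F × F) ⊕ (F × F)) where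
  Adj
    | .inl p, .inr l => p.2 = l.1 * p.1 + l.2
    | .inr l, .inl p => p.2 = l.1 * p.1 + l.2
    | _, _ => False
  symm := ⟨by rintro (p | p) (q | q) h <;> exact h⟩
  loopless := ⟨by rintro (p | p) h <;> exact h⟩

lemma eq_or_eq_of_incident [Field F] {p q l k : F × F} (hpl : p.2 = l.1 * p.1 + l.2)
    (hpk : p.2 = k.1 * p.1 + k.2) (hql : q.2 = l.1 * q.1 + l.2) (hqk : q.2 = k.1 * q.1 + k.2) :
    p = q ∨ l = k := by
  have hmul : (l.1 - k.1) * (p.1 - q.1) = 0 := by linear_combination hpk - hpl + hql - hqk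
  rcases mul_eq_zero.1 hmul with h | h <;> rw [sub_eq_zero] at h
  · exact .inr (Prod.ext h (by linear_combination hpk - hpl - p.1 * h))
  · exact .inl (Prod.ext h (by linear_combination hpl - hql + l.1 * h))

lemma subsingleton_commonNeighbors_pointLineGraph [Field F] :
    Pairwise fun u v => ((pointLineGraph F).commonNeighbors u v).Subsingleton := by
  rintro (p | l) (q | k) huv (x | x) ⟨hx, hx'⟩ (y | y) ⟨hy, hy'⟩ <;> try contradiction
  · exact congrArg _ ((eq_or_eq_of_incident hx hy hx' hy').resolve_left (ne_of_apply_ne _ huv))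
  · exact congrArg _ ((eq_or_eq_of_incident hx hx' hy hy').resolve_right (ne_of_apply_ne _ huv))

lemma card_pow_three_le_ncard_edgeSet_pointLineGraph [Field F] [Fintype F] :
    Fintype.card F ^ 3 ≤ (pointLineGraph F).edgeSet.ncard := by
  let edge : F × F × F → Sym2 ((F × F) ⊕ (F × F)) := fun q =>
    s(.inl (q.1, q.2.1 * q.1 + q.2.2), .inr (q.2.1, q.2.2))
  have hedge : edge.Injective := by
    rintro ⟨x, m, c⟩ ⟨x', m', c'⟩ h
    simp only [edge, Sym2.eq_iff, Sum.inl.injEq, Sum.inr.injEq, Prod.mk.injEq, reduceCtorEq,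
      and_self, or_false] at h
    obtain ⟨⟨rfl, -⟩, rfl, rfl⟩ := h
    rfl
  calc Fintype.card F ^ 3 = (Set.range edge).ncard := by
        rw [Set.ncard_range_of_injective hedge, Nat.card_eq_fintype_card, Fintype.card_prod,
          Fintype.card_prod, pow_three]
    _ ≤ (pointLineGraph F).edgeSet.ncard :=
        Set.ncard_le_ncard (Set.range_subset_iff.2 fun q => (rfl : _ = _))

variable (α β) [Nontrivial α] [Nontrivial β]

lemma pow_three_le_turanNumber_sq (hn : 8 ≤ n) :
    n ^ 3 ≤ 512 * turanNumber n (completeBipartiteGraph α β) ^ 2 := by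
  obtain ⟨p, hp, hlt, hle⟩ := Nat.exists_prime_lt_and_le_two_mul (Nat.sqrt (n / 8))
    (Nat.sqrt_pos.2 (by lia)).ne'
  have := Fact.mk hp
  have hnp : n ≤ 8 * p ^ 2 := by
    have := (Nat.lt_succ_sqrt' (n / 8)).trans_le (Nat.pow_le_pow_left hlt 2)
    lia
  have hpn : Fintype.card ((ZMod p × ZMod p) ⊕ (ZMod p × ZMod p)) ≤ n := by
    have := (Nat.pow_le_pow_left hle 2).trans_eq (mul_pow _ _ 2)
    have := Nat.sqrt_le' (n / 8)
    simp only [Fintype.card_sum, Fintype.card_prod, ZMod.card]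
    lia
  have hcube := (card_pow_three_le_ncard_edgeSet_pointLineGraph (F := ZMod p)).trans
    (ncard_edgeSet_le_turanNumber_completeBipartiteGraph (α := α) (β := β)
      subsingleton_commonNeighbors_pointLineGraph hpn)
  rw [ZMod.card] at hcube
  calc n ^ 3 ≤ (8 * p ^ 2) ^ 3 := Nat.pow_le_pow_left hnp 3
    _ = 512 * (p ^ 3) ^ 2 := by ring
    _ ≤ 512 * turanNumber n (completeBipartiteGraph α β) ^ 2 := by gcongr

lemma isLittleO_natCast_turanNumber :
    (fun n : ℕ => (n : ℝ)) =o[atTop] fun n =>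
      (turanNumber n (completeBipartiteGraph α β) : ℝ) := by
  refine isLittleO_iff.2 fun c hc => ?_
  filter_upwards [eventually_ge_atTop 8,
    tendsto_natCast_atTop_atTop.eventually_ge_atTop (512 / c ^ 2)] with n hn hnc
  have hcube : (n : ℝ) ^ 3 ≤ 512 * (turanNumber n (completeBipartiteGraph α β) : ℝ) ^ 2 := by
    exact_mod_cast pow_three_le_turanNumber_sq α β hn
  have hlarge : 512 ≤ c ^ 2 * n := (div_le_iff₀' (by positivity)).1 hnc
  rw [Real.norm_natCast, Real.norm_natCast]
  refine le_of_sq_le_sq ?_ (by positivity)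
  have hscaled : 512 * (n : ℝ) ^ 2 ≤
      512 * (c * (turanNumber n (completeBipartiteGraph α β) : ℝ)) ^ 2 := by
    calc 512 * (n : ℝ) ^ 2 ≤ c ^ 2 * n * n ^ 2 := by gcongr
      _ = c ^ 2 * n ^ 3 := by ring
      _ ≤ c ^ 2 * (512 * (turanNumber n (completeBipartiteGraph α β) : ℝ) ^ 2) := by gcongr
      _ = 512 * (c * (turanNumber n (completeBipartiteGraph α β) : ℝ)) ^ 2 := by ring
  linarith

lemma eventually_mul_le_turanNumber_sub_one (K : ℝ) :
    ∀ᶠ n : ℕ in atTop, K * n ≤ (turanNumber n (completeBipartiteGraph α β) : ℝ) - 1 := by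
  have hpos : 0 < |K| + 1 := by positivity
  filter_upwards [(isLittleO_natCast_turanNumber α β).bound (inv_pos.2 hpos),
    eventually_ge_atTop 1] with n hbound hn
  rw [Real.norm_natCast, Real.norm_natCast, inv_mul_eq_div, le_div_iff₀' hpos] at hbound
  have hone : (1 : ℝ) ≤ n := by exact_mod_cast hn
  have hK : K * n ≤ |K| * n := by gcongr; exact le_abs_self K
  linarith

end TuranNumber

theorem statement11_general {r t : ℕ} (hr : 2 ≤ r) (ht : 2 ≤ t) {c ε : ℝ} (hc : 0 < c)
    (hε : 0 < ε) :
    ∃ N : ℕ, ∀ (a b : ℕ) (H : Fin a → Fin b → Prop), N ≤ a + b → ¬ HasBiclique H r t →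
      c * ((turanNumber (a + b) (completeBipartiteGraph (Fin r) (Fin t)) : ℝ) - 1) ≤
        ({p : Fin a × Fin b | H p.1 p.2}.ncard : ℝ) →
      ∀ σ : Fin (a + b) ≃ (Fin a ⊕ Fin b),
        (1 - ε) * ({p : Fin a × Fin b | H p.1 p.2}.ncard : ℝ) ≤
          (backCount (bipTournament a b H) σ : ℝ) := by
  have := Fin.nontrivial_iff_two_le.2 hr
  have := Fin.nontrivial_iff_two_le.2 ht
  let C := r.centralBinom * t + 2 * r
  obtain ⟨N, hN⟩ := Filter.eventually_atTop.1
    (eventually_mul_le_turanNumber_sub_one (Fin r) (Fin t) (C / (ε * c)))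
  refine ⟨N, fun a b H hab hH he σ => ?_⟩
  have hback : {p : Fin a × Fin b | H p.1 p.2}.ncard ≤
      backCount (bipTournament a b H) σ + C * (a + b) := by
    refine (ncard_edges_le_backCount_add (by lia) hH σ).trans ?_
    gcongr
    lia
  have hlinear : (C * (a + b : ℕ) : ℝ) ≤ ε * {p : Fin a × Fin b | H p.1 p.2}.ncard := by
    calc (C * (a + b : ℕ) : ℝ) = ε * (c * (C / (ε * c) * (a + b : ℕ))) := by field_simp
      _ ≤ ε * (c * ((turanNumber (a + b) (completeBipartiteGraph (Fin r) (Fin t)) : ℝ) - 1)) := by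
        gcongr
        exact hN _ hab
      _ ≤ ε * {p : Fin a × Fin b | H p.1 p.2}.ncard := by gcongr
  have hcast : ({p : Fin a × Fin b | H p.1 p.2}.ncard : ℝ) ≤
      backCount (bipTournament a b H) σ + C * (a + b : ℕ) := by exact_mod_cast hback
  linarith

/-- **Claim.** For `t ≥ 3`, `r = ⌈t/2⌉` and all sufficiently large `n = a + b`: if the
bipartite graph `H` between classes of sizes `a` and `b` has no copy of `K_{r,t}` and at
least `(ex(n, K_{r,t}) - 1)/2` edges, then every ordering of the vertex set of the
associated tournament has at least `e(H)/10^5` backward edges. -/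
theorem statement11 (t : ℕ) (ht : 3 ≤ t) :
    ∃ N : ℕ, ∀ (a b : ℕ) (H : Fin a → Fin b → Prop), N ≤ a + b →
      NoKrt H ((t + 1) / 2) t →
      ((turanNumber (a + b) (completeBipartiteGraph (Fin ((t + 1) / 2)) (Fin t)) : ℝ) - 1) / 2 ≤
        (({p : Fin a × Fin b | H p.1 p.2}).ncard : ℝ) →
      ∀ σ : Fin (a + b) ≃ (Fin a ⊕ Fin b),
        (({p : Fin a × Fin b | H p.1 p.2}).ncard : ℝ) / 10 ^ 5 ≤
          (backCount (bipTournament a b H) σ : ℝ) := by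
  obtain ⟨N, hN⟩ := statement11_general (r := (t + 1) / 2) (t := t) (by lia) (by lia)
    (c := 1 / 2) (ε := 1 - 1 / 10 ^ 5) (by norm_num) (by norm_num)
  exact ⟨N, fun a b H hab hH he σ => by linarith [hN a b H hab hH.1 (by linarith) σ]⟩
end
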